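/- arXiv:1311.4926 — 3 statements merged into one kernel-verified Lean document; each statement's English description precedes it below -/
import Mathlib

section
/- Let f: ℝ → ℝ be a measurable function with period 1 whose distribution function F(x) = μ{t ∈ (0,1) : f(t) ≤ x} satisfies F(x) < 1 for all x, and suppose 1 − F is regularly varying at +∞ with exponent −α for some α > 0 (i.e. 1 − F(x) = x^{−α} ℓ(x) with ℓ slowly varying). Let (n_k) be a strictly increasing sequence of positive integers for which there exist positive numbers (T_k) with μ{x ∈ (0,1): |f(x)| ≥ T_k} ≤ k^{−2} and Σ_{k=1}^∞ ( T_k δ_k^{1/4} + ω₂(f_{T_k}, 8 δ_k^{1/2})^{1/2} ) < ∞. Set M_n(x) = max_{1 ≤ k ≤ n} f(n_k x). Then there exist real sequences (a_n) and (b_n) with b_n > 0 such that, with respect to Lebesgue measure on (0,1), (M_n − a_n)/b_n converges in distribution to the Fréchet law G given by G(x) = exp(−x^{−α}) for x > 0 and G(x) = 0 for x ≤ 0. -/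
open MeasureTheory ProbabilityTheory Filter

/-- `δ_k` from the paper: `δ_1 = 1`, `δ_k = 5 (n_{k-1}/n_k + n_k/n_{k+1})` for `k ≥ 2`. -/
noncomputable def delta (n : ℕ → ℕ) : ℕ → ℝ
  | 0 => 1
  | 1 => 1
  | (k + 2) => 5 * ((n (k + 1) : ℝ) / (n (k + 2) : ℝ) + (n (k + 2) : ℝ) / (n (k + 3) : ℝ))

/-- truncation `f_T = f · 1{|f| ≤ T}`. -/
noncomputable def trunc (f : ℝ → ℝ) (T : ℝ) : ℝ → ℝ := fun x => if |f x| ≤ T then f x else 0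

/-- The `L²` modulus of continuity `ω₂(g, δ)`. -/
noncomputable def omega2 (g : ℝ → ℝ) (δ : ℝ) : ℝ :=
  ⨆ h : Set.Icc (0 : ℝ) δ, Real.sqrt (∫ x in (0:ℝ)..1, (g (x + (h : ℝ)) - g (x - (h : ℝ))) ^ 2)

/-- `L` is slowly varying at `+∞`. -/
def SlowlyVarying (L : ℝ → ℝ) : Prop :=
  ∀ c : ℝ, 0 < c → Tendsto (fun x => L (c * x) / L x) atTop (nhds 1)

/-- `M_N(x) = max_{1 ≤ k ≤ N} f(n_k x)` (junk value `0` for `N = 0`). -/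
noncomputable def Mmax (f : ℝ → ℝ) (n : ℕ → ℕ) (N : ℕ) (x : ℝ) : ℝ :=
  if h : (Finset.Icc 1 N).Nonempty then (Finset.Icc 1 N).sup' h (fun k => f ((n k : ℝ) * x))
  else 0

/-!
Sample `f (n_k ·)` on a dyadic grid whose mesh is about `(n_k n_{k+1})^{-1/2}`. The grid is fine for
`f (n_k ·)`: by averaging over the position of the sampling point inside the cells, the tail of `f`
and the `L²` modulus of its truncation bound the probability that the sampled function is off by
more than `r`. It is coarse for `f (n_{k+1} ·)`, which runs through about `√(n_{k+1} / n_k)` periods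
in each cell and hence is independent of the grid up to an error of order `√(n_k / n_{k+1})`. Both
errors are summable in `k`, so, conditioning successively on the grid σ-algebras, the distribution
function of `M_N` at `u` lies between `F (u - r) ^ N - ε` and `F (u + r) ^ N + ε` for all large `N`,
uniformly in `u`.

An i.i.d. sample from `F` has a Fréchet limit under the norming `b_N = F⁻¹ (1 - 1 / N)` without
centering. Since `b_N` stays away from `0` and the limit law is continuous, the shift by `r` is
harmless and the limit passes to `M_N`.
-/

open Set Topology

section UnitInterval

/-- Lebesgue measure on `(0, 1)`, the probability space on which the maxima live. -/
noncomputable abbrev unitMeasure : Measure ℝ := volume.restrict (Ioo 0 1)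

instance : IsProbabilityMeasure unitMeasure := ⟨by simp⟩

lemma unitMeasure_setOf (p : ℝ → Prop) :
    unitMeasure {t | p t} = volume {t ∈ Ioo (0 : ℝ) 1 | p t} := by
  rw [Measure.restrict_apply' measurableSet_Ioo, inter_comm]
  rfl

lemma integral_unitMeasure (g : ℝ → ℝ) : ∫ x, g x ∂unitMeasure = ∫ x in (0 : ℝ)..1, g x := by
  rw [intervalIntegral.integral_of_le zero_le_one, integral_Ioc_eq_integral_Ioo]

lemma unitMeasure_real_eq_integral_indicator {E : Set ℝ} (hE : MeasurableSet E) :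
    unitMeasure.real E = ∫ x in (0 : ℝ)..1, E.indicator 1 x := by
  rw [← integral_unitMeasure, integral_indicator_one hE]

lemma indicator_one_mem_Icc {X : Type*} (E : Set X) (x : X) :
    E.indicator (1 : X → ℝ) x ∈ Icc (0 : ℝ) 1 :=
  ⟨indicator_nonneg (fun _ _ => zero_le_one) x, indicator_le_self' (fun _ _ => zero_le_one) x⟩

lemma intervalIntegrable_indicator_one {E : Set ℝ} (hE : MeasurableSet E) (a b : ℝ) :
    IntervalIntegrable (E.indicator (1 : ℝ → ℝ)) volume a b := by
  have hconst := intervalIntegrable_const (μ := volume) (a := a) (b := b) (c := (1 : ℝ))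
  exact ⟨hconst.1.indicator hE, hconst.2.indicator hE⟩

lemma periodic_indicator_one {E : Set ℝ} {c : ℝ} (hp : Function.Periodic (· ∈ E) c) :
    Function.Periodic (E.indicator (1 : ℝ → ℝ)) c := fun x => by
  classical
  simp only [indicator_apply, Pi.one_apply]
  exact if_congr (iff_of_eq (hp x)) rfl rfl

lemma unitMeasure_real_preimage_mul_add {E : Set ℝ} (hE : MeasurableSet E)
    (hp : Function.Periodic (· ∈ E) 1) {n : ℕ} (hn : 0 < n) (c : ℝ) :
    unitMeasure.real {x | n * x + c ∈ E} = unitMeasure.real E := by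
  have hn' : (n : ℝ) ≠ 0 := by positivity
  have hpre : MeasurableSet {x : ℝ | n * x + c ∈ E} := (by fun_prop : Measurable _) hE
  have hperiods : ∫ x in c..n + c, E.indicator (1 : ℝ → ℝ) x
      = n * ∫ x in (0 : ℝ)..1, E.indicator (1 : ℝ → ℝ) x := by
    have hp' := periodic_indicator_one hp
    have := hp'.intervalIntegral_add_zsmul_eq n c (intervalIntegrable_indicator_one hE)
    rw [hp'.intervalIntegral_add_eq c 0] at this
    simpa [add_comm] using this
  rw [unitMeasure_real_eq_integral_indicator hpre, unitMeasure_real_eq_integral_indicator hE]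
  calc ∫ x in (0 : ℝ)..1, {x : ℝ | n * x + c ∈ E}.indicator (1 : ℝ → ℝ) x
      = ∫ x in (0 : ℝ)..1, E.indicator (1 : ℝ → ℝ) (n * x + c) := rfl
    _ = ∫ x in (0 : ℝ)..1, E.indicator (1 : ℝ → ℝ) x := by
      rw [intervalIntegral.integral_comp_mul_add _ hn', mul_one, mul_zero, zero_add, hperiods,
        smul_eq_mul, inv_mul_cancel_left₀ hn']

lemma abs_integral_sub_mul_integral_le_one {ψ : ℝ → ℝ} (hp : Function.Periodic ψ 1)
    (hint : ∀ a b, IntervalIntegrable ψ volume a b) (h01 : ∀ x, ψ x ∈ Icc (0 : ℝ) 1) (a b : ℝ) :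
    |(∫ x in a..b, ψ x) - (b - a) * ∫ x in (0 : ℝ)..1, ψ x| ≤ 1 := by
  have bounds {s t : ℝ} (hst : s ≤ t) : (∫ x in s..t, ψ x) ∈ Icc 0 (t - s) := by
    refine ⟨intervalIntegral.integral_nonneg hst fun x _ => (h01 x).1, ?_⟩
    simpa using intervalIntegral.integral_mono_on hst (hint s t)
      (intervalIntegrable_const (c := (1 : ℝ))) fun x _ => (h01 x).2
  set m := ⌊b - a⌋
  have hperiods : ∫ x in a..a + m, ψ x = m * ∫ x in (0 : ℝ)..1, ψ x := by
    have := hp.intervalIntegral_add_zsmul_eq m a hint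
    rw [hp.intervalIntegral_add_eq a 0] at this
    simpa using this
  have hm₀ : (m : ℝ) ≤ b - a := Int.floor_le _
  have hm₁ : b - a < m + 1 := Int.lt_floor_add_one _
  obtain ⟨hr₀, hr₁⟩ := bounds (show a + m ≤ b by linarith)
  obtain ⟨he₀, he₁⟩ := bounds (zero_le_one (α := ℝ))
  rw [← intervalIntegral.integral_add_adjacent_intervals (hint a (a + m)) (hint (a + m) b),
    hperiods, abs_le]
  constructor <;> nlinarith

end UnitInterval

section Grid

lemma floor_natCast_mul_eq_of_mem_Ioo {m i : ℕ} (hm : 0 < m) {t : ℝ}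
    (ht : t ∈ Ioo ((i : ℝ) / m) ((i + 1 : ℕ) / m)) : ⌊(m : ℝ) * t⌋ = i := by
  have hm' : (0 : ℝ) < m := by exact_mod_cast hm
  have hlow := (div_lt_iff₀' hm').1 ht.1
  have hupp := (lt_div_iff₀' hm').1 ht.2
  rw [Int.floor_eq_iff]
  push_cast at hupp ⊢
  exact ⟨hlow.le, hupp⟩

lemma integral_floor_mul_eq_sum {m : ℕ} (hm : 0 < m) (c : ℤ → ℝ) {g : ℝ → ℝ}
    (hg : ∀ a b, IntervalIntegrable g volume a b) :
    ∫ t in (0 : ℝ)..1, c ⌊(m : ℝ) * t⌋ * g t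
      = ∑ i ∈ Finset.range m, c i * ∫ t in (i : ℝ) / m..(i + 1 : ℕ) / m, g t := by
  have hm' : (m : ℝ) ≠ 0 := by positivity
  have hle (i : ℕ) : (i : ℝ) / m ≤ (i + 1 : ℕ) / m := by gcongr; simp
  have heq (i : ℕ) : EqOn (fun t => c i * g t) (fun t => c ⌊(m : ℝ) * t⌋ * g t)
      (Ioo ((i : ℝ) / m) ((i + 1 : ℕ) / m)) := fun t ht => by
    simp only [floor_natCast_mul_eq_of_mem_Ioo hm ht]
  have hint (i : ℕ) : IntervalIntegrable (fun t => c ⌊(m : ℝ) * t⌋ * g t) volume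
      ((i : ℝ) / m) ((i + 1 : ℕ) / m) := by
    refine ((hg _ _).const_mul (c i)).congr_ae ?_
    rw [uIoc_of_le (hle i), ← restrict_Ioo_eq_restrict_Ioc]
    exact (ae_restrict_mem measurableSet_Ioo).mono (heq i)
  have hsum := intervalIntegral.sum_integral_adjacent_intervals
    (a := fun i : ℕ => (i : ℝ) / m) (n := m) fun i _ => hint i
  rw [Nat.cast_zero, zero_div, div_self hm'] at hsum
  rw [← hsum]
  refine Finset.sum_congr rfl fun i _ => ?_
  rw [← intervalIntegral.integral_const_mul]
  exact (intervalIntegral.integral_congr_Ioo_of_le (hle i) (heq i)).symm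

/-- The σ-algebras generated by the increasingly fine grids of mesh `1 / m i`. -/
noncomputable def gridFiltration (m : ℕ → ℕ) (hm₀ : ∀ i, 0 < m i)
    (hm : ∀ i, m i ∣ m (i + 1)) : Filtration ℕ (inferInstance : MeasurableSpace ℝ) where
  seq i := MeasurableSpace.comap (fun t : ℝ => ⌊(m i : ℝ) * t⌋) ⊤
  mono' i j hij := by
    obtain ⟨d, hd⟩ : m i ∣ m j := Nat.rel_of_forall_rel_succ_of_le (· ∣ ·) hm hij
    have hd₀ : (d : ℝ) ≠ 0 := by
      have := hd ▸ hm₀ j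
      exact_mod_cast (pos_of_mul_pos_right this (Nat.zero_le _)).ne'
    have hfloor :
        (fun t : ℝ => ⌊(m i : ℝ) * t⌋) = (· / (d : ℤ)) ∘ fun t : ℝ => ⌊(m j : ℝ) * t⌋ := by
      funext t
      rw [Function.comp_apply, ← Int.floor_div_natCast, hd]
      congr 1
      push_cast
      field_simp
    simp only [hfloor, ← MeasurableSpace.comap_comp]
    exact MeasurableSpace.comap_mono le_top
  le' i := Measurable.comap_le (by fun_prop)

lemma abs_integral_indicator_mul_sub_le {n : ℕ} (hn : 0 < n) {E : Set ℝ} (hE : MeasurableSet E)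
    (hp : Function.Periodic (· ∈ E) 1) (a b : ℝ) :
    |∫ t in a..b, (E.indicator (1 : ℝ → ℝ) (n * t) - unitMeasure.real E)| ≤ 1 / n := by
  have hn' : (0 : ℝ) < n := by exact_mod_cast hn
  have hint : IntervalIntegrable (fun t => E.indicator (1 : ℝ → ℝ) (n * t)) volume a b :=
    intervalIntegrable_indicator_one ((by fun_prop : Measurable fun t : ℝ => (n : ℝ) * t) hE) a b
  have hdisc := abs_integral_sub_mul_integral_le_one (periodic_indicator_one hp)
    (intervalIntegrable_indicator_one hE) (indicator_one_mem_Icc E) (n * a) (n * b)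
  rw [← unitMeasure_real_eq_integral_indicator hE] at hdisc
  have hrescale : ∫ t in a..b, (E.indicator (1 : ℝ → ℝ) (n * t) - unitMeasure.real E)
      = ((∫ t in n * a..n * b, E.indicator (1 : ℝ → ℝ) t)
        - (n * b - n * a) * unitMeasure.real E) / n := by
    rw [intervalIntegral.integral_sub hint intervalIntegrable_const,
      intervalIntegral.integral_comp_mul_left _ hn'.ne', intervalIntegral.integral_const,
      smul_eq_mul, smul_eq_mul]
    field_simp
  rw [hrescale, abs_div, abs_of_pos hn']
  gcongr

lemma abs_unitMeasure_real_inter_sub_mul_le {m n : ℕ} (hm : 0 < m) (hn : 0 < n) {E : Set ℝ}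
    (hE : MeasurableSet E) (hp : Function.Periodic (· ∈ E) 1) (S : Set ℤ) :
    |unitMeasure.real ({t | ⌊(m : ℝ) * t⌋ ∈ S} ∩ {t | (n : ℝ) * t ∈ E})
      - unitMeasure.real {t | ⌊(m : ℝ) * t⌋ ∈ S} * unitMeasure.real E| ≤ m / n := by
  have hA : MeasurableSet {t : ℝ | ⌊(m : ℝ) * t⌋ ∈ S} :=
    (by fun_prop : Measurable fun t : ℝ => ⌊(m : ℝ) * t⌋) S.to_countable.measurableSet
  have hB : MeasurableSet {t : ℝ | (n : ℝ) * t ∈ E} := (by fun_prop : Measurable _) hE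
  set e := unitMeasure.real E
  have hg_int (a b : ℝ) : IntervalIntegrable (fun t => E.indicator (1 : ℝ → ℝ) (n * t) - e)
      volume a b := (intervalIntegrable_indicator_one hB a b).sub intervalIntegrable_const
  have hsum : unitMeasure.real ({t | ⌊(m : ℝ) * t⌋ ∈ S} ∩ {t | (n : ℝ) * t ∈ E})
        - unitMeasure.real {t | ⌊(m : ℝ) * t⌋ ∈ S} * e
      = ∑ i ∈ Finset.range m, S.indicator (1 : ℤ → ℝ) i
          * ∫ t in (i : ℝ) / m..(i + 1 : ℕ) / m, (E.indicator (1 : ℝ → ℝ) (n * t) - e) := by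
    rw [← integral_floor_mul_eq_sum hm _ hg_int,
      unitMeasure_real_eq_integral_indicator (hA.inter hB),
      unitMeasure_real_eq_integral_indicator hA, ← intervalIntegral.integral_mul_const,
      ← intervalIntegral.integral_sub (intervalIntegrable_indicator_one (hA.inter hB) 0 1)
        ((intervalIntegrable_indicator_one hA 0 1).mul_const e)]
    refine intervalIntegral.integral_congr fun t _ => ?_
    simp only [inter_indicator_one, Pi.mul_apply, mul_sub]
    rfl
  rw [hsum]
  calc |∑ i ∈ Finset.range m, S.indicator (1 : ℤ → ℝ) i
          * ∫ t in (i : ℝ) / m..(i + 1 : ℕ) / m, (E.indicator (1 : ℝ → ℝ) (n * t) - e)|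
      ≤ ∑ _i ∈ Finset.range m, 1 / (n : ℝ) := by
        refine (Finset.abs_sum_le_sum_abs _ _).trans (Finset.sum_le_sum fun i _ => ?_)
        obtain ⟨h₀, h₁⟩ := indicator_one_mem_Icc S (i : ℤ)
        rw [abs_mul, abs_of_nonneg h₀]
        exact (mul_le_of_le_one_left (abs_nonneg _) h₁).trans
          (abs_integral_indicator_mul_sub_le hn hE hp _ _)
    _ = m / n := by rw [Finset.sum_const, Finset.card_range, nsmul_eq_mul, mul_one_div]

end Grid

section GridApproximation

-- Averaging over the position `θ` of the sampling point inside the cells replaces a choice of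
-- one good point per cell: for each `t` the sampled offset stays within `1 / m` of `t`.
lemma exists_measure_floor_add_div_mem_le (μ : Measure ℝ) [SFinite μ] {m : ℝ} (hm : 0 < m)
    {D : Set (ℝ × ℝ)} (hD : MeasurableSet D) {B : ENNReal}
    (hB : ∀ w, |w| ≤ 1 / m → μ {t | (t, t + w) ∈ D} ≤ B) :
    ∃ θ : ℝ, μ {t | (t, (⌊m * t⌋ + θ) / m) ∈ D} ≤ 2 * B := by
  have hgrid : MeasurableSet {p : ℝ × ℝ | (p.1, (⌊m * p.1⌋ + p.2) / m) ∈ D} :=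
    (by fun_prop : Measurable fun p : ℝ × ℝ => (p.1, (⌊m * p.1⌋ + p.2) / m)) hD
  have hshift : MeasurableSet {p : ℝ × ℝ | (p.1, p.1 + p.2 / m) ∈ D} :=
    (by fun_prop : Measurable fun p : ℝ × ℝ => (p.1, p.1 + p.2 / m)) hD
  have hslice (t : ℝ) : unitMeasure {θ | (t, (⌊m * t⌋ + θ) / m) ∈ D}
      ≤ volume.restrict (Icc (-1) 1) {v | (t, t + v / m) ∈ D} := by
    rw [Measure.restrict_apply' measurableSet_Ioo, Measure.restrict_apply' measurableSet_Icc,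
      ← measure_preimage_add_right volume (-Int.fract (m * t))
        ({v | (t, t + v / m) ∈ D} ∩ Icc (-1) 1)]
    refine measure_mono fun θ ⟨hθ, hθ₀, hθ₁⟩ => ⟨?_, ?_, ?_⟩
    · have : t + (θ + -Int.fract (m * t)) / m = (⌊m * t⌋ + θ) / m := by
        rw [← Int.self_sub_floor]
        field_simp
        ring
      rwa [mem_ofPred_eq, this]
    · linarith [Int.fract_lt_one (m * t)]
    · linarith [Int.fract_nonneg (m * t)]
  obtain ⟨θ, hθ⟩ := exists_le_lintegral (μ := unitMeasure)
    (measurable_measure_prodMk_right (μ := μ) hgrid).aemeasurable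
  refine ⟨θ, hθ.trans ?_⟩
  calc ∫⁻ θ, μ {t | (t, (⌊m * t⌋ + θ) / m) ∈ D} ∂unitMeasure
      = ∫⁻ t, unitMeasure {θ | (t, (⌊m * t⌋ + θ) / m) ∈ D} ∂μ :=
        (Measure.prod_apply_symm hgrid).symm.trans (Measure.prod_apply hgrid)
    _ ≤ ∫⁻ t, volume.restrict (Icc (-1) 1) {v | (t, t + v / m) ∈ D} ∂μ := lintegral_mono hslice
    _ = ∫⁻ v in Icc (-1) 1, μ {t | (t, t + v / m) ∈ D} :=
        (Measure.prod_apply hshift).symm.trans (Measure.prod_apply_symm hshift)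
    _ ≤ ∫⁻ _ in Icc (-1 : ℝ) 1, B := by
        refine setLIntegral_mono measurable_const fun v hv => hB _ ?_
        rw [abs_div, abs_of_pos hm]
        gcongr
        exact abs_le.2 hv
    _ = 2 * B := by
        rw [setLIntegral_const, Real.volume_Icc, mul_comm]
        norm_num

lemma exists_unitMeasure_real_abs_sub_floor_le {f : ℝ → ℝ} (hf : Measurable f)
    (hper : Function.Periodic f 1) {n m : ℕ} (hn : 0 < n) (hm : 0 < m) {r B : ℝ}
    (hB : ∀ w : ℝ, |w| ≤ n / m → unitMeasure.real {t | r < |f t - f (t + w)|} ≤ B) :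
    ∃ φ : ℤ → ℝ,
      unitMeasure.real {t | r < |f (n * t) - φ ⌊(m : ℝ) * t⌋|} ≤ 2 * B := by
  have hB₀ : 0 ≤ B := measureReal_nonneg.trans (hB 0 (by rw [abs_zero]; positivity))
  have hmeas (w : ℝ) : MeasurableSet {t : ℝ | r < |f t - f (t + w)|} :=
    measurableSet_lt measurable_const (by fun_prop)
  obtain ⟨θ, hθ⟩ := exists_measure_floor_add_div_mem_le unitMeasure (m := m) (by positivity)
    (D := {p | r < |f (n * p.1) - f (n * p.2)|}) (B := ENNReal.ofReal B)
    (measurableSet_lt measurable_const (by fun_prop)) fun w hw => by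
      have hw' : |n * w| ≤ n / m := by
        rw [abs_mul, Nat.abs_cast, ← mul_one_div]
        gcongr
      have hper' : Function.Periodic (· ∈ {t | r < |f t - f (t + n * w)|}) 1 := fun t => by
        simp only [mem_ofPred_eq, hper t, add_right_comm t 1, hper (t + n * w)]
      have := unitMeasure_real_preimage_mul_add (hmeas (n * w)) hper' hn 0
      simp only [mem_ofPred_eq, add_zero, ← mul_add] at this
      rw [← ofReal_measureReal]
      exact ENNReal.ofReal_le_ofReal (this.trans_le (hB _ hw'))
  refine ⟨fun i => f (n * ((i + θ) / m)), ENNReal.toReal_le_of_le_ofReal (by positivity) ?_⟩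
  rwa [ENNReal.ofReal_mul zero_le_two, ENNReal.ofReal_ofNat]

end GridApproximation

section ModulusOfContinuity

lemma measurable_trunc {f : ℝ → ℝ} (hf : Measurable f) (T : ℝ) : Measurable (trunc f T) :=
  hf.ite (measurableSet_le (by fun_prop) measurable_const) measurable_const

lemma abs_trunc_le (f : ℝ → ℝ) (T x : ℝ) : |trunc f T x| ≤ |T| := by
  unfold trunc
  split_ifs with h
  · exact h.trans (le_abs_self T)
  · simp

lemma periodic_trunc {f : ℝ → ℝ} {c : ℝ} (hf : Function.Periodic f c) (T : ℝ) :
    Function.Periodic (trunc f T) c := fun x => by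
  simp only [trunc, hf x]

lemma trunc_eq_self {f : ℝ → ℝ} {T x : ℝ} (h : |f x| ≤ T) : trunc f T x = f x := if_pos h

lemma omega2_nonneg (g : ℝ → ℝ) (d : ℝ) : 0 ≤ omega2 g d :=
  Real.iSup_nonneg fun _ => Real.sqrt_nonneg _

variable {g : ℝ → ℝ} {C : ℝ}

lemma sq_sub_le_of_abs_le (hC : ∀ x, |g x| ≤ C) (x y : ℝ) : (g x - g y) ^ 2 ≤ (2 * C) ^ 2 := by
  refine sq_le_sq' ?_ ?_ <;> linarith [abs_le.1 (hC x), abs_le.1 (hC y)]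

lemma integrable_sq_sub (hg : Measurable g) (hC : ∀ x, |g x| ≤ C) (h : ℝ) :
    Integrable (fun x => (g (x + h) - g (x - h)) ^ 2) unitMeasure :=
  Integrable.of_bound (by fun_prop) ((2 * C) ^ 2)
    (ae_of_all _ fun x => by
      simpa only [Real.norm_of_nonneg (sq_nonneg _)] using sq_sub_le_of_abs_le hC _ _)

lemma integral_sq_sub_le_omega2_sq (hg : Measurable g) (hC : ∀ x, |g x| ≤ C) {h d : ℝ}
    (h₀ : 0 ≤ h) (hd : h ≤ d) :
    ∫ x in (0 : ℝ)..1, (g (x + h) - g (x - h)) ^ 2 ≤ omega2 g d ^ 2 := by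
  have hbdd : BddAbove (range fun h : Icc (0 : ℝ) d =>
      √(∫ x in (0 : ℝ)..1, (g (x + h) - g (x - h)) ^ 2)) := by
    refine ⟨√((2 * C) ^ 2), ?_⟩
    rintro _ ⟨h, rfl⟩
    refine Real.sqrt_le_sqrt ?_
    rw [← integral_unitMeasure]
    simpa using integral_mono (integrable_sq_sub hg hC h) (integrable_const _)
      fun x => sq_sub_le_of_abs_le hC (x + h) (x - h)
  exact (Real.sqrt_le_iff.1 (le_ciSup hbdd ⟨h, h₀, hd⟩)).2

lemma unitMeasure_real_lt_abs_sub_le_omega2 (hg : Measurable g) (hC : ∀ x, |g x| ≤ C)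
    {r h d : ℝ} (hr : 0 < r) (h₀ : 0 ≤ h) (hd : h ≤ d) :
    unitMeasure.real {x | r < |g (x + h) - g (x - h)|} ≤ (omega2 g d / r) ^ 2 := by
  rw [div_pow, le_div_iff₀' (by positivity)]
  calc r ^ 2 * unitMeasure.real {x | r < |g (x + h) - g (x - h)|}
      ≤ r ^ 2 * unitMeasure.real {x | r ^ 2 ≤ (g (x + h) - g (x - h)) ^ 2} := by
        refine mul_le_mul_of_nonneg_left (measureReal_mono fun x hx => ?_) (sq_nonneg r)
        exact sq_le_sq.2 ((abs_of_pos hr).trans_le (le_of_lt hx))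
    _ ≤ ∫ x, (g (x + h) - g (x - h)) ^ 2 ∂unitMeasure :=
        mul_meas_ge_le_integral_of_nonneg (ae_of_all _ fun _ => sq_nonneg _)
          (integrable_sq_sub hg hC h) _
    _ ≤ omega2 g d ^ 2 := by
        rw [integral_unitMeasure]
        exact integral_sq_sub_le_omega2_sq hg hC h₀ hd

lemma unitMeasure_real_lt_abs_sub_add_le_omega2 (hg : Measurable g) (hC : ∀ x, |g x| ≤ C)
    (hper : Function.Periodic g 1) {r d w : ℝ} (hr : 0 < r) (hw : |w| ≤ 2 * d) :
    unitMeasure.real {t | r < |g t - g (t + w)|} ≤ (omega2 g d / r) ^ 2 := by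
  set h := |w| / 2 with hh
  have hmeas : MeasurableSet {x | r < |g (x + h) - g (x - h)|} :=
    measurableSet_lt measurable_const (by fun_prop)
  have hper' : Function.Periodic (· ∈ {x | r < |g (x + h) - g (x - h)|}) 1 := fun x => by
    simp only [mem_ofPred_eq, add_right_comm x 1, add_sub_right_comm x 1, hper _]
  have hcenter : {t | r < |g t - g (t + w)|}
      = {t | ((1 : ℕ) : ℝ) * t + w / 2 ∈ {x | r < |g (x + h) - g (x - h)|}} := by
    ext t
    simp only [mem_ofPred_eq, Nat.cast_one, one_mul]
    rcases abs_cases w with ⟨hw', _⟩ | ⟨hw', _⟩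
    · rw [abs_sub_comm, hh, hw', add_sub_cancel_right, add_assoc, add_halves]
    · rw [hh, hw', neg_div, add_neg_cancel_right, sub_neg_eq_add, add_assoc, add_halves]
  rw [hcenter, unitMeasure_real_preimage_mul_add hmeas hper' one_pos]
  exact unitMeasure_real_lt_abs_sub_le_omega2 hg hC hr (by positivity) (by linarith)

lemma unitMeasure_real_lt_abs_sub_add_le_omega2_trunc {f : ℝ → ℝ} (hf : Measurable f)
    (hper : Function.Periodic f 1) (T : ℝ) {r d w : ℝ} (hr : 0 < r) (hw : |w| ≤ 2 * d) :
    unitMeasure.real {t | r < |f t - f (t + w)|}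
      ≤ 2 * unitMeasure.real {t | T ≤ |f t|} + (omega2 (trunc f T) d / r) ^ 2 := by
  have htail : MeasurableSet {t | T ≤ |f t|} := measurableSet_le measurable_const (by fun_prop)
  have htail_shift : unitMeasure.real {t | T ≤ |f (t + w)|} = unitMeasure.real {t | T ≤ |f t|} := by
    have hper' : Function.Periodic (· ∈ {t | T ≤ |f t|}) 1 := fun t => by
      simp only [mem_ofPred_eq, hper t]
    simpa using unitMeasure_real_preimage_mul_add htail hper' one_pos w
  have hcover : {t | r < |f t - f (t + w)|} ⊆ ({t | T ≤ |f t|} ∪ {t | T ≤ |f (t + w)|})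
      ∪ {t | r < |trunc f T t - trunc f T (t + w)|} := by
    intro t ht
    by_contra hcon
    simp only [mem_union, mem_ofPred_eq, not_or, not_le, not_lt] at hcon ht
    obtain ⟨⟨h₁, h₂⟩, h₃⟩ := hcon
    rw [trunc_eq_self h₁.le, trunc_eq_self h₂.le] at h₃
    exact absurd ht h₃.not_gt
  calc unitMeasure.real {t | r < |f t - f (t + w)|}
      ≤ unitMeasure.real {t | T ≤ |f t|} + unitMeasure.real {t | T ≤ |f (t + w)|}
        + unitMeasure.real {t | r < |trunc f T t - trunc f T (t + w)|} :=
        (measureReal_mono hcover).trans ((measureReal_union_le _ _).trans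
          (by gcongr; exact measureReal_union_le _ _))
    _ ≤ 2 * unitMeasure.real {t | T ≤ |f t|} + (omega2 (trunc f T) d / r) ^ 2 := by
        rw [htail_shift, ← two_mul]
        gcongr
        exact unitMeasure_real_lt_abs_sub_add_le_omega2 (measurable_trunc hf T) (abs_trunc_le f T)
          (periodic_trunc hper T) hr hw

end ModulusOfContinuity

section AlmostIndependence

lemma le_mul_pow_add_sum {a e : ℕ → ℝ} {q : ℝ} (hq₀ : 0 ≤ q) (hq₁ : q ≤ 1) (he : ∀ i, 0 ≤ e i)
    (h : ∀ i, a (i + 1) ≤ a i * q + e i) (j : ℕ) :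
    a j ≤ a 0 * q ^ j + ∑ i ∈ Finset.range j, e i := by
  induction j with
  | zero => simp
  | succ j ih =>
    have hsum : 0 ≤ ∑ i ∈ Finset.range j, e i := Finset.sum_nonneg fun i _ => he i
    calc a (j + 1) ≤ a j * q + e j := h j
      _ ≤ (a 0 * q ^ j + ∑ i ∈ Finset.range j, e i) * q + e j := by gcongr
      _ ≤ a 0 * q ^ (j + 1) + ∑ i ∈ Finset.range (j + 1), e i := by
        rw [Finset.sum_range_succ, pow_succ]
        linarith [mul_le_of_le_one_right hsum hq₁]

variable {Ω : Type*} [mΩ : MeasurableSpace Ω] {μ : Measure Ω}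

lemma measureReal_inter_forall_le [IsFiniteMeasure μ] {ι : Type*} (A : Set Ω) (s : Finset ι)
    (X Y : ι → Ω → ℝ) (r u : ℝ) :
    μ.real (A ∩ {ω | ∀ i ∈ s, X i ω ≤ u}) ≤ μ.real (A ∩ {ω | ∀ i ∈ s, Y i ω ≤ u + r})
      + ∑ i ∈ s, μ.real {ω | r < |X i ω - Y i ω|} := by
  refine (measureReal_mono (s₂ := (A ∩ {ω | ∀ i ∈ s, Y i ω ≤ u + r})
    ∪ ⋃ i ∈ s, {ω | r < |X i ω - Y i ω|}) ?_).trans ((measureReal_union_le _ _).trans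
      (by gcongr; exact measureReal_biUnion_finset_le _ _))
  rintro ω ⟨hA, hX⟩
  by_cases h : ∃ i ∈ s, r < |X i ω - Y i ω|
  · exact .inr (mem_iUnion₂.2 (by simpa using h))
  · push Not at h
    exact .inl ⟨hA, fun i hi => by linarith [hX i hi, (abs_le.1 (h i hi)).1]⟩

variable [IsProbabilityMeasure μ] {ℱ : Filtration ℕ mΩ} {X Y : ℕ → Ω → ℝ} {G : ℝ → ℝ}
  {β c : ℕ → ℝ} {r : ℝ}

lemma measureReal_forall_le_mem_Icc (hY : ∀ i, Measurable[ℱ (i + 1)] (Y i))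
    (hXY : ∀ i, μ.real {ω | r < |X i ω - Y i ω|} ≤ β i)
    (hindep : ∀ i A, MeasurableSet[ℱ i] A → ∀ u,
      |μ.real (A ∩ {ω | X i ω ≤ u}) - μ.real A * G u| ≤ c i)
    (hG : ∀ u, G u ∈ Icc 0 1) (u : ℝ) (j : ℕ) :
    μ.real {ω | ∀ i < j, Y i ω ≤ u} ∈ Icc (G (u - r) ^ j - ∑ i ∈ Finset.range j, (c i + β i))
      (G (u + r) ^ j + ∑ i ∈ Finset.range j, (c i + β i)) := by
  set A : ℕ → Set Ω := fun j => {ω | ∀ i < j, Y i ω ≤ u}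
  have hA (j) : MeasurableSet[ℱ j] (A j) := by
    simp only [A, ofPred_forall]
    exact .iInter fun i => .iInter fun hi => (hY i).mono (ℱ.mono hi) le_rfl measurableSet_Iic
  have hA_zero : μ.real (A 0) = 1 := by simp [A]
  have hA_succ (j) : A (j + 1) = A j ∩ {ω | Y j ω ≤ u} := by
    ext ω
    simp only [A, mem_ofPred_eq, mem_inter_iff, Nat.forall_lt_succ_right]
  have he (i) : 0 ≤ c i + β i :=
    add_nonneg ((abs_nonneg _).trans (hindep i ∅ (@MeasurableSet.empty _ (ℱ i)) u))
      (measureReal_nonneg.trans (hXY i))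
  have hupper (j) : μ.real (A (j + 1)) ≤ μ.real (A j) * G (u + r) + (c j + β j) := by
    have h := measureReal_inter_forall_le (μ := μ) (A j) {j} Y X r u
    simp only [Finset.mem_singleton, forall_eq, Finset.sum_singleton, abs_sub_comm (Y j _)] at h
    rw [hA_succ]
    linarith [hXY j, (abs_le.1 (hindep j _ (hA j) (u + r))).2]
  have hlower (j) : -μ.real (A (j + 1)) ≤ -μ.real (A j) * G (u - r) + (c j + β j) := by
    have h := measureReal_inter_forall_le (μ := μ) (A j) {j} X Y r (u - r)
    simp only [Finset.mem_singleton, forall_eq, Finset.sum_singleton, sub_add_cancel] at h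
    rw [hA_succ]
    linarith [hXY j, (abs_le.1 (hindep j _ (hA j) (u - r))).1]
  constructor
  · have := le_mul_pow_add_sum (a := fun j => -μ.real (A j)) (hG _).1 (hG _).2 he hlower j
    rw [hA_zero] at this
    linarith
  · simpa [hA_zero] using
      le_mul_pow_add_sum (a := fun j => μ.real (A j)) (hG _).1 (hG _).2 he hupper j

lemma measureReal_forall_le_mem_Icc_of_approx (hY : ∀ i, Measurable[ℱ (i + 1)] (Y i))
    (hXY : ∀ i, μ.real {ω | r < |X i ω - Y i ω|} ≤ β i)
    (hindep : ∀ i A, MeasurableSet[ℱ i] A → ∀ u,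
      |μ.real (A ∩ {ω | X i ω ≤ u}) - μ.real A * G u| ≤ c i)
    (hG : ∀ u, G u ∈ Icc 0 1) (u : ℝ) (j : ℕ) :
    μ.real {ω | ∀ i < j, X i ω ≤ u}
      ∈ Icc (G (u - 2 * r) ^ j - ∑ i ∈ Finset.range j, (c i + 2 * β i))
        (G (u + 2 * r) ^ j + ∑ i ∈ Finset.range j, (c i + 2 * β i)) := by
  have hβ : ∑ i ∈ Finset.range j, μ.real {ω | r < |X i ω - Y i ω|}
      ≤ ∑ i ∈ Finset.range j, β i := Finset.sum_le_sum fun i _ => hXY i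
  have hupper := measureReal_inter_forall_le (μ := μ) univ (Finset.range j) X Y r u
  have hlower := measureReal_inter_forall_le (μ := μ) univ (Finset.range j) Y X r (u - r)
  simp only [univ_inter, Finset.mem_range, sub_add_cancel, abs_sub_comm (Y _ _)] at hupper hlower
  have hY_upper := (measureReal_forall_le_mem_Icc hY hXY hindep hG (u + r) j).2
  have hY_lower := (measureReal_forall_le_mem_Icc hY hXY hindep hG (u - r) j).1
  rw [show u + r + r = u + 2 * r by ring, Finset.sum_add_distrib] at hY_upper
  rw [show u - r - r = u - 2 * r by ring, Finset.sum_add_distrib] at hY_lower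
  rw [Finset.sum_add_distrib, ← Finset.mul_sum]
  constructor <;> linarith

end AlmostIndependence

section GridSize

/-- The number of cells of the grid attached to index `k`: a power of two, so that successive grids
refine each other, within a factor two of the geometric mean of `n k` and `n (k + 1)`. The grid is
thus fine compared with the scale `1 / n k` and coarse compared with the scale `1 / n (k + 1)`. -/
def gridSize (n : ℕ → ℕ) (k : ℕ) : ℕ := 2 ^ Nat.log 4 (n k * n (k + 1))

variable {n : ℕ → ℕ} {k : ℕ}

lemma gridSize_pos (n : ℕ → ℕ) (k : ℕ) : 0 < gridSize n k := by unfold gridSize; positivity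

lemma gridSize_sq (n : ℕ → ℕ) (k : ℕ) : gridSize n k ^ 2 = 4 ^ Nat.log 4 (n k * n (k + 1)) := by
  rw [gridSize, ← pow_mul, mul_comm, pow_mul, show 2 ^ 2 = 4 by rfl]

lemma gridSize_dvd_gridSize_succ (h₀ : n k ≤ n (k + 1)) (h₁ : n (k + 1) ≤ n (k + 2)) :
    gridSize n k ∣ gridSize n (k + 1) :=
  pow_dvd_pow 2 (Nat.log_mono_right (Nat.mul_le_mul h₀ h₁))

lemma gridSize_div_le_sqrt (h₀ : 0 < n k) (h₁ : 0 < n (k + 1)) :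
    (gridSize n k : ℝ) / n (k + 1) ≤ √(n k / n (k + 1)) := by
  have hsq : (gridSize n k : ℝ) ^ 2 ≤ n k * n (k + 1) := by
    exact_mod_cast (gridSize_sq n k).trans_le (Nat.pow_log_le_self 4 (by positivity))
  refine Real.le_sqrt_of_sq_le ?_
  rw [div_pow, div_le_div_iff₀ (by positivity) (by positivity)]
  nlinarith

lemma div_gridSize_le_sqrt (h₁ : 0 < n (k + 1)) :
    (n k : ℝ) / gridSize n k ≤ 2 * √(n k / n (k + 1)) := by
  have hsq : (n k : ℝ) * n (k + 1) ≤ 4 * (gridSize n k : ℝ) ^ 2 := by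
    have := Nat.lt_pow_succ_log_self (by norm_num : 1 < 4) (n k * n (k + 1))
    rw [pow_succ', ← gridSize_sq] at this
    exact_mod_cast this.le
  have hgrid : (0 : ℝ) < gridSize n k := by exact_mod_cast gridSize_pos n k
  rw [← div_le_iff₀' two_pos]
  refine Real.le_sqrt_of_sq_le ?_
  rw [div_div, div_pow, div_le_div_iff₀ (by positivity) (by positivity)]
  nlinarith

lemma delta_nonneg (n : ℕ → ℕ) : ∀ k, 0 ≤ delta n k
  | 0 => zero_le_one
  | 1 => zero_le_one
  | k + 2 => by rw [delta]; positivity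

lemma div_succ_le_delta (hk : 2 ≤ k) : (n k : ℝ) / n (k + 1) ≤ delta n k := by
  obtain ⟨k, rfl⟩ := Nat.exists_eq_add_of_le' hk
  have h₀ : (0 : ℝ) ≤ n (k + 1) / n (k + 2) := by positivity
  have h₁ : (0 : ℝ) ≤ n (k + 2) / n (k + 3) := by positivity
  rw [delta]
  linarith

lemma div_succ_le_delta_succ (hk : 1 ≤ k) : (n k : ℝ) / n (k + 1) ≤ delta n (k + 1) := by
  obtain ⟨k, rfl⟩ := Nat.exists_eq_add_of_le' hk
  have h₀ : (0 : ℝ) ≤ n (k + 1) / n (k + 2) := by positivity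
  have h₁ : (0 : ℝ) ≤ n (k + 2) / n (k + 3) := by positivity
  rw [delta]
  linarith

lemma exists_unitMeasure_real_abs_sub_gridSize_le {f : ℝ → ℝ} (hf : Measurable f)
    (hper : Function.Periodic f 1) (hk : 2 ≤ k) (h₀ : 0 < n k) (h₁ : 0 < n (k + 1)) (T : ℝ)
    {r : ℝ} (hr : 0 < r) :
    ∃ φ : ℤ → ℝ, unitMeasure.real {t | r < |f (n k * t) - φ ⌊(gridSize n k : ℝ) * t⌋|}
      ≤ 2 * (2 * unitMeasure.real {t | T ≤ |f t|}
        + (omega2 (trunc f T) (8 * √(delta n k)) / r) ^ 2) := by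
  refine exists_unitMeasure_real_abs_sub_floor_le hf hper h₀ (gridSize_pos n k) fun w hw =>
    unitMeasure_real_lt_abs_sub_add_le_omega2_trunc hf hper T hr ?_
  calc |w| ≤ 2 * √(n k / n (k + 1)) := hw.trans (div_gridSize_le_sqrt h₁)
    _ ≤ 2 * √(delta n k) := by gcongr; exact div_succ_le_delta hk
    _ ≤ 2 * (8 * √(delta n k)) := by linarith [Real.sqrt_nonneg (delta n k)]

end GridSize

section Tail

lemma cdf_map {Ω : Type*} [MeasurableSpace Ω] (μ : Measure Ω) [IsProbabilityMeasure μ] {X : Ω → ℝ}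
    (hX : Measurable X) (u : ℝ) : cdf (μ.map X) u = μ.real {ω | X ω ≤ u} := by
  have := Measure.isProbabilityMeasure_map (μ := μ) hX.aemeasurable
  rw [cdf_eq_real, map_measureReal_apply hX measurableSet_Iic]
  rfl

lemma eventually_sum_range_add_le {e : ℕ → ℝ} (he : Summable e) (he₀ : ∀ k, 0 ≤ e k)
    {ε : ℝ} (hε : 0 < ε) :
    ∀ᶠ K in atTop, ∀ j, ∑ i ∈ Finset.range j, e (i + K) ≤ ε := by
  filter_upwards [(tendsto_sum_nat_add e).eventually_lt_const hε] with K hK j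
  exact (((summable_nat_add_iff K).2 he).sum_le_tsum _ fun i _ => he₀ _).trans hK.le

variable {f : ℝ → ℝ} {n : ℕ → ℕ}

lemma abs_unitMeasure_real_inter_setOf_le_sub_mul_cdf_le (hf : Measurable f)
    (hper : Function.Periodic f 1) {k : ℕ} (hk : 1 ≤ k) (h₀ : 0 < n k) (h₁ : 0 < n (k + 1))
    (S : Set ℤ) (u : ℝ) :
    |unitMeasure.real ({t | ⌊(gridSize n k : ℝ) * t⌋ ∈ S} ∩ {t | f (n (k + 1) * t) ≤ u})
      - unitMeasure.real {t | ⌊(gridSize n k : ℝ) * t⌋ ∈ S} * cdf (unitMeasure.map f) u|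
      ≤ √(delta n (k + 1)) := by
  have hper' : Function.Periodic (· ∈ {t | f t ≤ u}) 1 := fun t => by
    simp only [mem_ofPred_eq, hper t]
  rw [cdf_map unitMeasure hf]
  calc _ ≤ (gridSize n k : ℝ) / n (k + 1) := abs_unitMeasure_real_inter_sub_mul_le
        (gridSize_pos n k) h₁ (measurableSet_le hf measurable_const) hper' S
    _ ≤ √(n k / n (k + 1)) := gridSize_div_le_sqrt h₀ h₁
    _ ≤ √(delta n (k + 1)) := Real.sqrt_le_sqrt (div_succ_le_delta_succ hk)

lemma exists_unitMeasure_real_tail_mem_Icc (hf : Measurable f) (hper : Function.Periodic f 1)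
    (hpos : ∀ k, 1 ≤ k → 0 < n k) (hmono : ∀ k, 1 ≤ k → n k ≤ n (k + 1)) {T : ℕ → ℝ}
    (htail : Summable fun k => unitMeasure.real {t | T k ≤ |f t|})
    (hdelta : Summable fun k => √(delta n k))
    (homega : Summable fun k => omega2 (trunc f (T k)) (8 * √(delta n k)) ^ 2)
    {r ε : ℝ} (hr : 0 < r) (hε : 0 < ε) :
    ∃ K, ∀ j u, unitMeasure.real {t | ∀ i < j, f (n (i + K + 1) * t) ≤ u}
      ∈ Icc (cdf (unitMeasure.map f) (u - r) ^ j - ε)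
        (cdf (unitMeasure.map f) (u + r) ^ j + ε) := by
  set F := cdf (unitMeasure.map f)
  set β : ℕ → ℝ := fun k => 2 * (2 * unitMeasure.real {t | T k ≤ |f t|}
    + (omega2 (trunc f (T k)) (8 * √(delta n k)) / (r / 2)) ^ 2) with hβ
  have hsum : Summable fun k => √(delta n k) + 2 * β k := by
    simp only [hβ, div_pow]
    exact hdelta.add ((((htail.mul_left 2).add (homega.div_const _)).mul_left 2).mul_left 2)
  have hnonneg (k) : 0 ≤ √(delta n k) + 2 * β k := by positivity
  obtain ⟨K, hK, hsumK⟩ := ((eventually_ge_atTop 1).and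
    ((tendsto_add_atTop_nat 1).eventually (eventually_sum_range_add_le hsum hnonneg hε))).exists
  have happrox (i : ℕ) := exists_unitMeasure_real_abs_sub_gridSize_le (n := n) (k := i + K + 1) hf
    hper (by omega) (hpos _ (by omega)) (hpos _ (by omega)) (T (i + K + 1)) (half_pos hr)
  choose φ hφ using happrox
  set ℱ := gridFiltration (fun i => gridSize n (i + K)) (fun i => gridSize_pos n _) fun i => by
    have := gridSize_dvd_gridSize_succ (hmono (i + K) (by omega)) (hmono (i + K + 1) (by omega))
    rwa [add_right_comm] at this
  have hY (i : ℕ) : Measurable[ℱ (i + 1)] fun t : ℝ => φ i ⌊(gridSize n (i + K + 1) : ℝ) * t⌋ := by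
    rw [add_right_comm]
    exact measurable_from_top.comp (comap_measurable _)
  have hindep (i : ℕ) (A : Set ℝ) (hA : MeasurableSet[ℱ i] A) (v : ℝ) :
      |unitMeasure.real (A ∩ {t | f (n (i + K + 1) * t) ≤ v}) - unitMeasure.real A * F v|
        ≤ √(delta n (i + K + 1)) := by
    obtain ⟨S, -, rfl⟩ := hA
    exact abs_unitMeasure_real_inter_setOf_le_sub_mul_cdf_le hf hper (by omega)
      (hpos _ (by omega)) (hpos _ (by omega)) S v
  refine ⟨K, fun j u => ?_⟩
  have hbounds := measureReal_forall_le_mem_Icc_of_approx (β := fun i => β (i + K + 1))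
    (X := fun i t => f (n (i + K + 1) * t)) hY hφ hindep (fun v => ⟨cdf_nonneg _ v, cdf_le_one _ v⟩)
    u j
  rw [mul_div_cancel₀ r two_ne_zero] at hbounds
  exact Icc_subset_Icc (by gcongr; exact hsumK j) (by gcongr; exact hsumK j) hbounds

lemma unitMeasure_real_lt_comp_mul (hf : Measurable f) (hper : Function.Periodic f 1) {m : ℕ}
    (hm : 0 < m) (u : ℝ) :
    unitMeasure.real {t | u < f (m * t)} = 1 - cdf (unitMeasure.map f) u := by
  have hper' : Function.Periodic (· ∈ {t | u < f t}) 1 := fun t => by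
    simp only [mem_ofPred_eq, hper t]
  have hdilate :=
    unitMeasure_real_preimage_mul_add (measurableSet_lt measurable_const hf) hper' hm 0
  simp only [add_zero, mem_ofPred_eq] at hdilate
  rw [hdilate, cdf_map unitMeasure hf, ← probReal_compl_eq_one_sub (measurableSet_le hf
    measurable_const), compl_ofPred]
  simp only [not_le]

lemma unitMeasure_real_tail_le (hf : Measurable f) (hper : Function.Periodic f 1)
    (hpos : ∀ k, 1 ≤ k → 0 < n k) (K j : ℕ) (u : ℝ) :
    unitMeasure.real {t | ∀ i < j, f (n (i + K + 1) * t) ≤ u}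
      ≤ unitMeasure.real {t | ∀ k ∈ Finset.Icc 1 (j + K), f (n k * t) ≤ u}
        + K * (1 - cdf (unitMeasure.map f) u) := by
  have hcover : {t : ℝ | ∀ i < j, f (n (i + K + 1) * t) ≤ u}
      ⊆ {t | ∀ k ∈ Finset.Icc 1 (j + K), f (n k * t) ≤ u}
        ∪ ⋃ k ∈ Finset.Icc 1 K, {t | u < f (n k * t)} := by
    intro t ht
    by_cases hhead : ∃ k ∈ Finset.Icc 1 K, u < f (n k * t)
    · exact .inr (mem_iUnion₂.2 (by simpa using hhead))
    · push Not at hhead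
      refine .inl fun k hk => ?_
      rw [Finset.mem_Icc] at hk
      rcases le_or_gt k K with hkK | hkK
      · exact hhead k (Finset.mem_Icc.2 ⟨hk.1, hkK⟩)
      · obtain ⟨i, rfl⟩ := Nat.exists_eq_add_of_le' hkK
        exact ht i (by omega)
  refine (measureReal_mono hcover).trans ((measureReal_union_le _ _).trans ?_)
  gcongr
  calc _ ≤ ∑ k ∈ Finset.Icc 1 K, unitMeasure.real {t | u < f (n k * t)} :=
        measureReal_biUnion_finset_le _ _
    _ = ∑ k ∈ Finset.Icc 1 K, (1 - cdf (unitMeasure.map f) u) :=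
        Finset.sum_congr rfl fun k hk =>
          unitMeasure_real_lt_comp_mul hf hper (hpos k (Finset.mem_Icc.1 hk).1) u
    _ = K * (1 - cdf (unitMeasure.map f) u) := by
        rw [Finset.sum_const, Nat.card_Icc, Nat.add_sub_cancel, nsmul_eq_mul]

lemma eventually_pow_le_or_mul_one_sub_le {K ε : ℝ} (hK : 0 ≤ K) (hε : 0 < ε) :
    ∀ᶠ N : ℕ in atTop, ∀ s ∈ Icc (0 : ℝ) 1, s ^ N ≤ ε ∨ K * (1 - s) ≤ ε := by
  have hq : max 0 (1 - ε / (K + 1)) < 1 := max_lt one_pos (sub_lt_self 1 (by positivity))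
  filter_upwards [(tendsto_pow_atTop_nhds_zero_of_lt_one (le_max_left _ _) hq).eventually_le_const
    hε] with N hN s hs
  rcases le_or_gt s (max 0 (1 - ε / (K + 1))) with h | h
  · exact .inl ((pow_le_pow_left₀ hs.1 h N).trans hN)
  · have := (le_max_right _ _).trans_lt h
    rw [sub_lt_comm, lt_div_iff₀ (by positivity)] at this
    exact .inr (by nlinarith [hs.2])

lemma eventually_pow_le_pow_add_add (K : ℕ) {ε : ℝ} (hε : 0 < ε) :
    ∀ᶠ N : ℕ in atTop, ∀ s ∈ Icc (0 : ℝ) 1, s ^ N ≤ s ^ (N + K) + ε := by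
  filter_upwards [eventually_pow_le_or_mul_one_sub_le K.cast_nonneg hε] with N hN s ⟨hs₀, hs₁⟩
  have hbernoulli := one_add_mul_sub_le_pow (by linarith : -1 ≤ s) K
  have hN₀ := pow_nonneg hs₀ N
  have hN₁ := pow_le_one₀ (n := N) hs₀ hs₁
  rw [pow_add]
  rcases hN s ⟨hs₀, hs₁⟩ with h | h
  · linarith [mul_nonneg hN₀ (pow_nonneg hs₀ K)]
  · nlinarith

lemma eventually_unitMeasure_real_forall_le_mem_Icc (hf : Measurable f)
    (hper : Function.Periodic f 1) (hpos : ∀ k, 1 ≤ k → 0 < n k)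
    (hmono : ∀ k, 1 ≤ k → n k ≤ n (k + 1)) {T : ℕ → ℝ}
    (htail : Summable fun k => unitMeasure.real {t | T k ≤ |f t|})
    (hdelta : Summable fun k => √(delta n k))
    (homega : Summable fun k => omega2 (trunc f (T k)) (8 * √(delta n k)) ^ 2)
    {r ε : ℝ} (hr : 0 < r) (hε : 0 < ε) :
    ∀ᶠ N : ℕ in atTop, ∀ u,
      unitMeasure.real {t | ∀ k ∈ Finset.Icc 1 N, f (n k * t) ≤ u}
        ∈ Icc (cdf (unitMeasure.map f) (u - r) ^ N - ε)
          (cdf (unitMeasure.map f) (u + r) ^ N + ε) := by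
  set F := cdf (unitMeasure.map f)
  have hF (v : ℝ) : F v ∈ Icc (0 : ℝ) 1 := ⟨cdf_nonneg _ v, cdf_le_one _ v⟩
  obtain ⟨K, hK⟩ := exists_unitMeasure_real_tail_mem_Icc hf hper hpos hmono htail hdelta homega hr
    (half_pos hε)
  filter_upwards [(tendsto_sub_atTop_nat K).eventually
      (eventually_pow_le_pow_add_add K (half_pos hε)),
    eventually_pow_le_or_mul_one_sub_le K.cast_nonneg (half_pos hε), eventually_ge_atTop K] with
    N hpow_j hpow_N hKN u
  obtain ⟨j, rfl⟩ := Nat.exists_eq_add_of_le' hKN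
  rw [Nat.add_sub_cancel] at hpow_j
  obtain ⟨hlower, hupper⟩ := hK j u
  constructor
  · have hhead := unitMeasure_real_tail_le hf hper hpos K j u
    have hpow_le : F (u - r) ^ (j + K) ≤ F (u - r) ^ j :=
      pow_le_pow_of_le_one (hF _).1 (hF _).2 (Nat.le_add_right j K)
    have hF_le : (K : ℝ) * (1 - F u) ≤ K * (1 - F (u - r)) := by
      gcongr
      linarith
    rcases hpow_N _ (hF (u - r)) with h | h
    · linarith [measureReal_nonneg (μ := unitMeasure)
        (s := {t | ∀ k ∈ Finset.Icc 1 (j + K), f (n k * t) ≤ u})]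
    · linarith
  · have hsub : unitMeasure.real {t | ∀ k ∈ Finset.Icc 1 (j + K), f (n k * t) ≤ u}
        ≤ unitMeasure.real {t | ∀ i < j, f (n (i + K + 1) * t) ≤ u} :=
      measureReal_mono fun t ht i hi => ht _ (Finset.mem_Icc.2 (by omega))
    linarith [hpow_j _ (hF (u + r))]

end Tail

section FrechetAttraction

/-- The distribution function of the Fréchet law with shape parameter `α`, the limit law of the
rescaled maxima. -/
noncomputable def frechetCDF (α x : ℝ) : ℝ := if 0 < x then Real.exp (-(x ^ (-α))) else 0

lemma continuous_frechetCDF {α : ℝ} (hα : 0 < α) : Continuous (frechetCDF α) := by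
  refine continuous_iff_continuousAt.2 fun x => ?_
  rcases lt_trichotomy x 0 with hx | rfl | hx
  · refine continuousAt_const.congr (f := fun _ => (0 : ℝ)) ?_
    filter_upwards [gt_mem_nhds hx] with y hy
    exact (if_neg hy.not_gt).symm
  · refine continuousAt_iff_continuous_left'_right'.2 ⟨?_, ?_⟩
    · exact continuousWithinAt_const.congr (f := fun _ => (0 : ℝ))
        (fun y hy => if_neg (lt_asymm hy)) (if_neg (lt_irrefl 0))
    · have hexp : Tendsto (fun y : ℝ => Real.exp (-(y ^ (-α)))) (𝓝[>] 0) (𝓝 0) :=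
        Real.tendsto_exp_neg_atTop_nhds_zero.comp (tendsto_rpow_neg_nhdsGT_zero (neg_lt_zero.2 hα))
      rw [ContinuousWithinAt, frechetCDF, if_neg (lt_irrefl 0)]
      refine hexp.congr' ?_
      filter_upwards [self_mem_nhdsWithin] with y hy
      exact (if_pos hy).symm
  · refine (Real.continuous_exp.continuousAt.comp
      (Real.continuousAt_rpow_const x (-α) (.inl hx.ne')).neg).congr ?_
    filter_upwards [lt_mem_nhds hx] with y hy
    exact (if_pos hy).symm

variable {H : ℝ → ℝ} {α : ℝ}

lemma tendsto_div_of_slowlyVarying (hreg : SlowlyVarying fun x => H x * x ^ α) {c : ℝ}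
    (hc : 0 < c) : Tendsto (fun x => H (c * x) / H x) atTop (𝓝 (c ^ (-α))) := by
  have hlim := (hreg c hc).mul_const (c ^ (-α))
  rw [one_mul] at hlim
  refine hlim.congr' ?_
  filter_upwards [eventually_gt_atTop 0] with x hx
  have hx' := Real.rpow_pos_of_pos hx α
  have hc' := Real.rpow_pos_of_pos hc α
  rw [Real.mul_rpow hc.le hx.le, Real.rpow_neg hc.le]
  field_simp [hx'.ne', hc'.ne']

/-- A `1 / N`-quantile of the tail function `H`, the scale of the maximum of `N` independent
variables with tail `H`. It is restricted to `[1, ∞)` so as to be positive for every `N`. -/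
noncomputable def tailQuantile (H : ℝ → ℝ) (N : ℕ) : ℝ := sInf {y | 1 ≤ y ∧ N * H y ≤ 1}

lemma exists_one_le_mul_le_one (hH : Tendsto H atTop (𝓝 0)) (N : ℕ) :
    {y | 1 ≤ y ∧ N * H y ≤ 1}.Nonempty := by
  have hlim := hH.const_mul (N : ℝ)
  rw [mul_zero] at hlim
  obtain ⟨y, hy⟩ := ((eventually_ge_atTop 1).and (hlim.eventually_le_const one_pos)).exists
  exact ⟨y, hy⟩

lemma one_le_tailQuantile (hH : Tendsto H atTop (𝓝 0)) (N : ℕ) : 1 ≤ tailQuantile H N :=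
  le_csInf (exists_one_le_mul_le_one hH N) fun _ hy => hy.1

lemma mul_le_one_of_tailQuantile_lt (hanti : Antitone H) (hH : Tendsto H atTop (𝓝 0)) {N : ℕ}
    {y : ℝ} (hy : tailQuantile H N < y) : N * H y ≤ 1 := by
  obtain ⟨z, ⟨-, hz⟩, hzy⟩ := exists_lt_of_csInf_lt (exists_one_le_mul_le_one hH N) hy
  exact (mul_le_mul_of_nonneg_left (hanti hzy.le) N.cast_nonneg).trans hz

lemma one_lt_mul_of_lt_tailQuantile {N : ℕ} {y : ℝ} (hy₁ : 1 ≤ y) (hy : y < tailQuantile H N) :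
    1 < N * H y := by
  by_contra! h
  exact hy.not_ge (csInf_le ⟨1, fun _ hz => hz.1⟩ ⟨hy₁, h⟩)

lemma tendsto_tailQuantile_atTop (hanti : Antitone H) (hpos : ∀ x, 0 < H x)
    (hH : Tendsto H atTop (𝓝 0)) : Tendsto (tailQuantile H) atTop atTop := by
  refine tendsto_atTop.2 fun M => ?_
  have hlarge := tendsto_natCast_atTop_atTop.atTop_mul_const (hpos M)
  filter_upwards [hlarge.eventually_gt_atTop 1] with N hN
  by_contra! hlt
  exact hN.not_ge (mul_le_one_of_tailQuantile_lt hanti hH hlt)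

lemma tendsto_div_tailQuantile (hanti : Antitone H) (hpos : ∀ x, 0 < H x)
    (hH : Tendsto H atTop (𝓝 0)) (hreg : SlowlyVarying fun x => H x * x ^ α) {y s : ℝ}
    (hy : 0 < y) (hs : 0 < s) :
    Tendsto (fun N => H (tailQuantile H N * y) / H (tailQuantile H N * s)) atTop
      (𝓝 ((y / s) ^ (-α))) := by
  refine ((tendsto_div_of_slowlyVarying hreg (div_pos hy hs)).comp
    ((tendsto_tailQuantile_atTop hanti hpos hH).atTop_mul_const hs)).congr fun N => ?_
  rw [Function.comp_apply, show y / s * (tailQuantile H N * s) = tailQuantile H N * y by field_simp]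

lemma tendsto_mul_tailQuantile (hanti : Antitone H) (hpos : ∀ x, 0 < H x)
    (hH : Tendsto H atTop (𝓝 0)) (hreg : SlowlyVarying fun x => H x * x ^ α) {y : ℝ}
    (hy : 0 < y) :
    Tendsto (fun N : ℕ => N * H (tailQuantile H N * y)) atTop (𝓝 (y ^ (-α))) := by
  set b := tailQuantile H
  have hb := tendsto_tailQuantile_atTop hanti hpos hH
  have hcont : Tendsto (fun s => (y / s) ^ (-α)) (𝓝 1) (𝓝 (y ^ (-α))) := by
    have hdiv : ContinuousAt (fun s => y / s) 1 :=
      continuousAt_const.div continuousAt_id one_ne_zero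
    simpa using (hdiv.rpow_const (.inl (by simpa using hy.ne'))).tendsto
  have heq (N : ℕ) (s : ℝ) : N * H (b N * y) = H (b N * y) / H (b N * s) * (N * H (b N * s)) := by
    have := (hpos (b N * s)).ne'
    field_simp
  refine tendsto_order.2 ⟨fun a ha => ?_, fun a ha => ?_⟩
  · obtain ⟨s, hs, hs₀, hs₁⟩ := (((hcont.mono_left nhdsWithin_le_nhds).eventually_const_lt ha).and
      (Ioo_mem_nhdsLT one_pos)).exists
    filter_upwards [(tendsto_div_tailQuantile hanti hpos hH hreg hy hs₀).eventually_const_lt hs,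
      (hb.atTop_mul_const hs₀).eventually_ge_atTop 1] with N hN hbs
    have hlt := one_lt_mul_of_lt_tailQuantile hbs
      (mul_lt_of_lt_one_right (one_pos.trans_le (one_le_tailQuantile hH N)) hs₁)
    rw [heq N s]
    exact hN.trans_le (le_mul_of_one_le_right (div_pos (hpos _) (hpos _)).le hlt.le)
  · obtain ⟨s, hs, hs₁⟩ := (((hcont.mono_left nhdsWithin_le_nhds).eventually_lt_const ha).and
      self_mem_nhdsWithin : ∀ᶠ s in 𝓝[>] (1 : ℝ), _).exists
    filter_upwards [(tendsto_div_tailQuantile hanti hpos hH hreg hy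
      (one_pos.trans hs₁)).eventually_lt_const hs] with N hN
    have hle := mul_le_one_of_tailQuantile_lt hanti hH
      (lt_mul_of_one_lt_right (one_pos.trans_le (one_le_tailQuantile hH N)) hs₁)
    rw [heq N s]
    exact (mul_le_of_le_one_right (div_pos (hpos _) (hpos _)).le hle).trans_lt hN

lemma tendsto_cdf_pow_frechetCDF (P : Measure ℝ) (hlt : ∀ x, cdf P x < 1)
    (hreg : SlowlyVarying fun x => (1 - cdf P x) * x ^ α) (x : ℝ) :
    Tendsto (fun N : ℕ => cdf P (tailQuantile (fun y => 1 - cdf P y) N * x) ^ N) atTop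
      (𝓝 (frechetCDF α x)) := by
  have hH : Tendsto (fun y => 1 - cdf P y) atTop (𝓝 0) := by
    simpa using (tendsto_cdf_atTop P).const_sub 1
  have hanti : Antitone fun y => 1 - cdf P y := fun y z hyz =>
    sub_le_sub_left (monotone_cdf P hyz) 1
  rw [frechetCDF]
  split_ifs with hx
  · have hmul := (tendsto_mul_tailQuantile hanti (fun y => sub_pos.2 (hlt y)) hH hreg hx).neg
    simp only [← mul_neg, neg_sub] at hmul
    simpa using Real.tendsto_one_add_pow_exp_of_tendsto hmul
  · refine squeeze_zero (fun N => pow_nonneg (cdf_nonneg P _) N) (fun N => ?_)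
      (tendsto_pow_atTop_nhds_zero_of_lt_one (cdf_nonneg P 0) (hlt 0))
    have hb := zero_le_one.trans (one_le_tailQuantile hH N)
    exact pow_le_pow_left₀ (cdf_nonneg P _)
      (monotone_cdf P (mul_nonpos_of_nonneg_of_nonpos hb (not_lt.1 hx))) N

lemma tendsto_of_forall_eventually_mem_Icc_shift {P Q : ℕ → ℝ → ℝ} {G : ℝ → ℝ} {b : ℕ → ℝ}
    {c x : ℝ} (hG : ContinuousAt G x) (hQ_mono : ∀ N, Monotone (Q N)) (hc : 0 < c)
    (hb : ∀ᶠ N in atTop, c ≤ b N) (hQ : ∀ y, Tendsto (fun N => Q N (b N * y)) atTop (𝓝 (G y)))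
    (hPQ : ∀ r > 0, ∀ ε > 0, ∀ᶠ N in atTop, ∀ u, P N u ∈ Icc (Q N (u - r) - ε) (Q N (u + r) + ε)) :
    Tendsto (fun N => P N (b N * x)) atTop (𝓝 (G x)) := by
  refine tendsto_order.2 ⟨fun a ha => ?_, fun a ha => ?_⟩
  · obtain ⟨y, hy, hyx⟩ := (((hG.tendsto.mono_left nhdsWithin_le_nhds).eventually_const_lt ha).and
      self_mem_nhdsWithin : ∀ᶠ y in 𝓝[<] x, _).exists
    obtain ⟨a', haa', ha'⟩ := exists_between hy
    filter_upwards [hb, (hQ y).eventually_const_lt ha',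
      hPQ (c * (x - y)) (mul_pos hc (sub_pos.2 hyx)) (a' - a) (sub_pos.2 haa')] with N hbN hQN hPN
    have hshift : b N * y ≤ b N * x - c * (x - y) := by
      nlinarith [mul_le_mul_of_nonneg_right hbN (sub_pos.2 hyx).le]
    linarith [(hPN (b N * x)).1, hQ_mono N hshift]
  · obtain ⟨y, hy, hxy⟩ := (((hG.tendsto.mono_left nhdsWithin_le_nhds).eventually_lt_const ha).and
      self_mem_nhdsWithin : ∀ᶠ y in 𝓝[>] x, _).exists
    obtain ⟨a', ha', haa'⟩ := exists_between hy
    filter_upwards [hb, (hQ y).eventually_lt_const ha',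
      hPQ (c * (y - x)) (mul_pos hc (sub_pos.2 hxy)) (a - a') (sub_pos.2 haa')] with N hbN hQN hPN
    have hshift : b N * x + c * (y - x) ≤ b N * y := by
      nlinarith [mul_le_mul_of_nonneg_right hbN (sub_pos.2 hxy).le]
    linarith [(hPN (b N * x)).2, hQ_mono N hshift]

end FrechetAttraction

section FrechetLimit

lemma eventually_le_of_tendsto_measureReal_tail {Ω : Type*} [MeasurableSpace Ω] {μ : Measure Ω}
    [IsProbabilityMeasure μ] {X : Ω → ℝ} (hX : Measurable X) {T : ℕ → ℝ}
    (htail : Tendsto (fun k => μ.real {ω | T k ≤ |X ω|}) atTop (𝓝 0)) {c : ℝ}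
    (hc : cdf (μ.map X) c < 1) : ∀ᶠ k in atTop, c ≤ T k := by
  filter_upwards [htail.eventually_lt_const (sub_pos.2 hc)] with k hk
  by_contra! hlt
  refine hk.not_ge ?_
  rw [cdf_map μ hX, ← probReal_compl_eq_one_sub (measurableSet_le hX measurable_const)]
  exact measureReal_mono fun ω (hω : ¬X ω ≤ c) =>
    hlt.le.trans ((not_le.1 hω).le.trans (le_abs_self _))

lemma summable_pow_of_nonneg {g : ℕ → ℝ} (hg : Summable g) (h₀ : ∀ k, 0 ≤ g k) {p : ℕ}
    (hp : p ≠ 0) : Summable fun k => g k ^ p := by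
  refine hg.of_norm_bounded_eventually_nat ?_
  filter_upwards [hg.tendsto_atTop_zero.eventually_le_const one_pos] with k hk
  rw [Real.norm_of_nonneg (pow_nonneg (h₀ k) p)]
  exact pow_le_of_le_one (h₀ k) hk hp

lemma summable_sqrt_delta {n : ℕ → ℕ} {T w : ℕ → ℝ} (hT : ∀ᶠ k in atTop, 1 ≤ T k)
    (hw : ∀ k, 0 ≤ w k) (hsum : Summable fun k => T k * delta n k ^ ((1 : ℝ) / 4) + w k) :
    Summable fun k => √(delta n k) := by
  have hroot₀ (k : ℕ) : 0 ≤ delta n k ^ ((1 : ℝ) / 4) := Real.rpow_nonneg (delta_nonneg n k) _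
  have hroot : Summable fun k => delta n k ^ ((1 : ℝ) / 4) := by
    refine hsum.of_norm_bounded_eventually_nat ?_
    filter_upwards [hT] with k hk
    rw [Real.norm_of_nonneg (hroot₀ k)]
    linarith [le_mul_of_one_le_left (hroot₀ k) hk, hw k]
  refine (summable_pow_of_nonneg hroot hroot₀ two_ne_zero).congr fun k => ?_
  rw [Real.sqrt_eq_rpow, ← Real.rpow_mul_natCast (delta_nonneg n k)]
  norm_num

lemma summable_omega2_sq {g : ℕ → ℝ → ℝ} {d s : ℕ → ℝ} (hs : ∀ᶠ k in atTop, 0 ≤ s k)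
    (hsum : Summable fun k => s k + √(omega2 (g k) (d k))) :
    Summable fun k => omega2 (g k) (d k) ^ 2 := by
  have hroot : Summable fun k => √(omega2 (g k) (d k)) := by
    refine hsum.of_norm_bounded_eventually_nat ?_
    filter_upwards [hs] with k hk
    rw [Real.norm_of_nonneg (Real.sqrt_nonneg _)]
    linarith
  refine (summable_pow_of_nonneg hroot (fun k => Real.sqrt_nonneg _) four_ne_zero).congr fun k => ?_
  rw [show 4 = 2 * 2 from rfl, pow_mul, Real.sq_sqrt (omega2_nonneg _ _)]

lemma Mmax_le_iff (f : ℝ → ℝ) (n : ℕ → ℕ) {N : ℕ} (hN : 1 ≤ N) (t u : ℝ) :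
    Mmax f n N t ≤ u ↔ ∀ k ∈ Finset.Icc 1 N, f (n k * t) ≤ u := by
  rw [Mmax, dif_pos (Finset.nonempty_Icc.2 hN), Finset.sup'_le_iff]

lemma summable_unitMeasure_real_tail {f : ℝ → ℝ} {T : ℕ → ℝ}
    (htail : ∀ k, 1 ≤ k →
      volume {x ∈ Ioo (0 : ℝ) 1 | T k ≤ |f x|} ≤ ENNReal.ofReal (((k : ℝ) ^ 2)⁻¹)) :
    Summable fun k => unitMeasure.real {t | T k ≤ |f t|} := by
  refine (Real.summable_nat_pow_inv.2 one_lt_two).of_norm_bounded_eventually_nat ?_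
  filter_upwards [eventually_ge_atTop 1] with k hk
  rw [Real.norm_of_nonneg measureReal_nonneg, measureReal_def, unitMeasure_setOf]
  exact ENNReal.toReal_le_of_le_ofReal (by positivity) (htail k hk)

theorem stmt_3_general {α : ℝ} (hα : 0 < α) {f : ℝ → ℝ} (hf : Measurable f)
    (hper : Function.Periodic f 1) (hlt : ∀ x, cdf (unitMeasure.map f) x < 1)
    (hreg : SlowlyVarying fun x => (1 - cdf (unitMeasure.map f) x) * x ^ α)
    {n : ℕ → ℕ} (hpos : ∀ k, 1 ≤ k → 0 < n k) (hmono : ∀ k, 1 ≤ k → n k ≤ n (k + 1))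
    {T : ℕ → ℝ} (htail : Summable fun k => unitMeasure.real {t | T k ≤ |f t|})
    (hdelta : Summable fun k => √(delta n k))
    (homega : Summable fun k => omega2 (trunc f (T k)) (8 * √(delta n k)) ^ 2) :
    ∃ b : ℕ → ℝ, (∀ N, 0 < b N) ∧ ∀ x,
      Tendsto (fun N => unitMeasure.real {t | Mmax f n N t / b N ≤ x}) atTop
        (𝓝 (frechetCDF α x)) := by
  set F := cdf (unitMeasure.map f)
  have hb (N : ℕ) : 1 ≤ tailQuantile (fun y => 1 - F y) N :=
    one_le_tailQuantile (by simpa using (tendsto_cdf_atTop (unitMeasure.map f)).const_sub 1) N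
  have hb₀ (N : ℕ) := one_pos.trans_le (hb N)
  refine ⟨tailQuantile fun y => 1 - F y, hb₀, fun x => ?_⟩
  have hlim := tendsto_of_forall_eventually_mem_Icc_shift (continuous_frechetCDF hα).continuousAt
    (fun N u v huv => pow_le_pow_left₀ (cdf_nonneg _ u) (monotone_cdf (unitMeasure.map f) huv) N)
    one_pos (.of_forall hb) (tendsto_cdf_pow_frechetCDF (unitMeasure.map f) hlt hreg)
    (fun r hr ε hε => eventually_unitMeasure_real_forall_le_mem_Icc hf hper hpos hmono htail hdelta
      homega hr hε) (x := x)
  refine hlim.congr' ?_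
  filter_upwards [eventually_ge_atTop 1] with N hN
  simp only [div_le_iff₀' (hb₀ N), Mmax_le_iff f n hN]

end FrechetLimit

/-- **Corollary (Fréchet limit for maxima).** If the distribution function `F` of the
1-periodic measurable `f` satisfies `F(x) < 1` for all `x` and `1 − F` is regularly varying
at `+∞` with exponent `−α` (i.e. `x ↦ (1 − F(x)) xᵅ` is slowly varying), and `(n_k)`
satisfies the gap/modulus condition, then `(M_n − a_n)/b_n` converges in distribution
(w.r.t. Lebesgue measure on `(0,1)`) to the Fréchet law `G(x) = exp(−x^{−α})` for `x > 0`,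
`G(x) = 0` for `x ≤ 0`; since `G` is continuous, convergence in distribution is expressed as
pointwise convergence of the distribution functions. -/
theorem stmt_3 (α : ℝ) (hα : 0 < α)
    (f : ℝ → ℝ) (hf : Measurable f) (hper : ∀ x, f (x + 1) = f x)
    (F : ℝ → ℝ) (hF : ∀ x, F x = (volume {t ∈ Set.Ioo (0 : ℝ) 1 | f t ≤ x}).toReal)
    (hFlt : ∀ x, F x < 1)
    (hreg : SlowlyVarying (fun x => (1 - F x) * x ^ α))
    (n : ℕ → ℕ) (hpos : ∀ k, 1 ≤ k → 0 < n k) (hmono : ∀ k, 1 ≤ k → n k < n (k + 1))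
    (T : ℕ → ℝ) (hT : ∀ k, 1 ≤ k → 0 < T k)
    (hTtail : ∀ k, 1 ≤ k →
      volume {x ∈ Set.Ioo (0 : ℝ) 1 | T k ≤ |f x|} ≤ ENNReal.ofReal (((k : ℝ) ^ 2)⁻¹))
    (hsum : Summable (fun k => T k * delta n k ^ ((1 : ℝ) / 4)
      + Real.sqrt (omega2 (trunc f (T k)) (8 * Real.sqrt (delta n k))))) :
    ∃ (a b : ℕ → ℝ), (∀ N, 0 < b N) ∧
      ∀ x : ℝ,
        Tendsto (fun N =>
            (volume {t ∈ Set.Ioo (0 : ℝ) 1 | (Mmax f n N t - a N) / b N ≤ x}).toReal)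
          atTop
          (nhds (if 0 < x then Real.exp (-(x ^ (-α))) else 0)) := by
  obtain rfl : F = cdf (unitMeasure.map f) := funext fun x => by
    rw [hF x, cdf_map unitMeasure hf, measureReal_def, unitMeasure_setOf]
  have htail := summable_unitMeasure_real_tail hTtail
  have hT_one : ∀ᶠ k in atTop, 1 ≤ T k :=
    eventually_le_of_tendsto_measureReal_tail hf htail.tendsto_atTop_zero (hFlt 1)
  have hdelta := summable_sqrt_delta hT_one (fun k => Real.sqrt_nonneg _) hsum
  have homega := summable_omega2_sq (hT_one.mono fun k hk => mul_nonneg (zero_le_one.trans hk)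
    (Real.rpow_nonneg (delta_nonneg n k) _)) hsum
  obtain ⟨b, hb, hlim⟩ := stmt_3_general hα hf hper hFlt hreg hpos
    (fun k hk => (hmono k hk).le) htail hdelta homega
  refine ⟨fun _ => 0, b, hb, fun x => (hlim x).congr fun N => ?_⟩
  rw [measureReal_def, unitMeasure_setOf]
  simp only [sub_zero]
end

section
/- Let (Ω, F, P) be an atomless probability space, let X be a discrete (countably valued) random variable on it, and let G be a Borel probability measure on ℝ² whose first marginal equals the law of X. Then there exists a random variable Y on (Ω, F, P) such that the joint distribution of the pair (X, Y) equals G. -/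
open MeasureTheory

/-- A measure is atomless if every set of positive measure contains a (measurable) subset of
strictly smaller positive measure. -/
def Atomless {Ω : Type*} [MeasurableSpace Ω] (μ : Measure Ω) : Prop :=
  ∀ s : Set Ω, MeasurableSet s → 0 < μ s →
    ∃ t, t ⊆ s ∧ MeasurableSet t ∧ 0 < μ t ∧ μ t < μ s

/-!
Among the measurable `T : Ω → ℝ`, one minimizes `∫ P(T = T ω) dP(ω)`. If the law of a minimizer
charged a point `a`, then splitting `{T = a}` by a set `t` with `0 < P t < P {T = a}` and passing
to `(T, 1_t)`, coded as a real map, would decrease this integral. Hence some `T` has a law without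
point masses. As `X` is countably valued, the conditional law `κ x` of `T` given `X = x` has no
point masses either for almost every `x`, so its distribution function `F x` maps `κ x` to the
uniform law. Composing with a measurable family `g x` that maps the uniform law to the conditional
law under `G` of the second coordinate given the first, `Y = g X (F X T)` has the required joint
law with `X`.
-/

open ENNReal Filter Function ProbabilityTheory Set Topology unitInterval

section Collision

variable {Ω β γ : Type*} [MeasurableSpace Ω]

/-- The probability that `T` takes the same value at two independent points of law `μ`; it is used
as a potential whose minimizers have a law without point masses. It is written as an integral of
fibre masses so that it makes sense for an arbitrary map `T`. -/
noncomputable def collisionMass (μ : Measure Ω) (T : Ω → β) : ℝ≥0∞ :=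
  ∫⁻ ω, μ (T ⁻¹' {T ω}) ∂μ

lemma collisionMass_mono (μ : Measure Ω) {S : Ω → β} {T : Ω → γ}
    (h : ∀ ω ω', S ω = S ω' → T ω = T ω') : collisionMass μ S ≤ collisionMass μ T :=
  lintegral_mono fun ω ↦ measure_mono fun ω' hω' ↦ h ω' ω hω'

lemma collisionMass_comp_le_of_injective (μ : Measure Ω) (T : Ω → β) {e : β → γ}
    (he : Injective e) : collisionMass μ (e ∘ T) ≤ collisionMass μ T :=
  collisionMass_mono μ fun _ _ h ↦ he h

lemma collisionMass_lt_top (μ : Measure Ω) [IsFiniteMeasure μ] (T : Ω → β) :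
    collisionMass μ T < ∞ :=
  IsFiniteMeasure.lintegral_lt_top_of_bounded_to_ennreal μ
    ⟨(μ univ).toNNReal, fun _ ↦ by
      rw [ENNReal.coe_toNNReal (measure_ne_top μ univ)]
      exact measure_mono (subset_univ _)⟩

variable [MeasurableSpace β] [MeasurableEq β]

lemma measurable_measure_singleton (ν : Measure β) [SFinite ν] :
    Measurable fun b ↦ ν {b} := by
  have fiber_diagonal (b : β) : Prod.mk b ⁻¹' diagonal β = {b} := by
    ext
    exact eq_comm
  simpa only [fiber_diagonal] using
    measurable_measure_prodMk_left (ν := ν) (measurableSet_diagonal (α := β))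

lemma measurable_measure_fiber (μ : Measure Ω) [SFinite μ] {T : Ω → β}
    (hT : Measurable T) : Measurable fun ω ↦ μ (T ⁻¹' {T ω}) := by
  simpa only [Measure.map_apply hT (measurableSet_singleton _), comp_def] using
    (measurable_measure_singleton (μ.map T)).comp hT

/-- A minimizing sequence can be merged into one map, since pairing only decreases the potential. -/
lemma exists_forall_collisionMass_le (μ : Measure Ω) :
    ∃ T : Ω → ℝ, Measurable T ∧
      ∀ S : Ω → ℝ, Measurable S → collisionMass μ T ≤ collisionMass μ S := by
  obtain ⟨u, -, u_tendsto, u_mem⟩ := exists_seq_tendsto_sInf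
    (S := collisionMass μ '' {S : Ω → ℝ | Measurable S})
    ⟨_, 0, measurable_const, rfl⟩ (OrderBot.bddBelow _)
  choose R R_measurable R_eq using u_mem
  let e := embeddingReal (ℕ → ℝ)
  have T_le_u (n : ℕ) : collisionMass μ (e ∘ fun ω k ↦ R k ω) ≤ u n := by
    rw [← R_eq n]
    exact (collisionMass_comp_le_of_injective μ _
      (measurableEmbedding_embeddingReal _).injective).trans
      (collisionMass_mono μ fun _ _ h ↦ congrFun h n)
  exact ⟨e ∘ fun ω k ↦ R k ω,
    (measurable_embeddingReal _).comp (measurable_pi_lambda _ R_measurable),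
    fun S hS ↦ (ge_of_tendsto' u_tendsto T_le_u).trans (sInf_le ⟨S, hS, rfl⟩)⟩

lemma Atomless.exists_collisionMass_prodMk_lt {μ : Measure Ω} [IsFiniteMeasure μ]
    (hμ : Atomless μ) {T : Ω → β} (hT : Measurable T) {b : β} (hb : μ (T ⁻¹' {b}) ≠ 0) :
    ∃ t, MeasurableSet t ∧
      collisionMass μ (fun ω ↦ (T ω, ω ∈ t)) < collisionMass μ T := by
  obtain ⟨t, t_sub, ht, t_pos, t_lt⟩ :=
    hμ (T ⁻¹' {b}) (hT (measurableSet_singleton b)) (pos_iff_ne_zero.2 hb)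
  refine ⟨t, ht, lintegral_strict_mono_of_ae_le_of_ae_lt_on
    (measurable_measure_fiber μ hT).aemeasurable (collisionMass_lt_top μ _).ne
    (ae_of_all _ fun ω ↦ measure_mono fun ω' h ↦ congrArg Prod.fst h) hb
    (ae_of_all _ fun ω hω ↦ ?_)⟩
  have Tω : T ω = b := hω
  rw [Tω]
  by_cases hωt : ω ∈ t
  · refine (measure_mono fun ω' h ↦ ?_).trans_lt t_lt
    exact (congrArg Prod.snd h).mpr hωt
  · have sdiff_lt : μ (T ⁻¹' {b} \ t) < μ (T ⁻¹' {b}) := by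
      rw [measure_sdiff t_sub ht.nullMeasurableSet (measure_ne_top μ t)]
      exact ENNReal.sub_lt_self (measure_ne_top μ _) hb t_pos.ne'
    refine (measure_mono fun ω' h ↦ ?_).trans_lt sdiff_lt
    exact ⟨(congrArg Prod.fst h).trans Tω, fun h' ↦ hωt ((congrArg Prod.snd h).mp h')⟩

theorem Atomless.exists_nullSingletonClass_map {μ : Measure Ω} [IsFiniteMeasure μ]
    (hμ : Atomless μ) : ∃ T : Ω → ℝ, Measurable T ∧ NullSingletonClass (μ.map T) := by
  obtain ⟨T, hT, T_min⟩ := exists_forall_collisionMass_le μ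
  refine ⟨T, hT, ⟨fun a ↦ ?_⟩⟩
  rw [Measure.map_apply hT (measurableSet_singleton a)]
  by_contra ha
  obtain ⟨t, ht, refined_lt⟩ := hμ.exists_collisionMass_prodMk_lt hT ha
  let e := embeddingReal (ℝ × Prop)
  have refined_measurable : Measurable (e ∘ fun ω ↦ (T ω, ω ∈ t)) :=
    (measurable_embeddingReal _).comp (hT.prodMk (measurable_mem.2 ht))
  exact ((T_min _ refined_measurable).trans (collisionMass_comp_le_of_injective μ _
    (measurableEmbedding_embeddingReal _).injective)).not_gt refined_lt

end Collision

section ProbabilityIntegralTransform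

/-- The cumulative distribution function of `μ` as a map into the unit interval. -/
noncomputable def cdfUnitInterval (μ : Measure ℝ) (t : ℝ) : I :=
  ⟨cdf μ t, cdf_nonneg μ t, cdf_le_one μ t⟩

lemma continuous_cdf (μ : Measure ℝ) [IsProbabilityMeasure μ] [NullSingletonClass μ] :
    Continuous (cdf μ) := by
  refine continuous_iff_continuousAt.2 fun t ↦ ?_
  rw [(monotone_cdf μ).continuousAt_iff_leftLim_eq_rightLim, (cdf μ).rightLim_eq]
  have jump : ENNReal.ofReal (cdf μ t - leftLim (cdf μ) t) = 0 := by
    rw [← StieltjesFunction.measure_singleton, measure_cdf, measure_singleton]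
  exact ((monotone_cdf μ).leftLim_le le_rfl).antisymm
    (sub_nonpos.1 (ENNReal.ofReal_eq_zero.1 jump))

lemma exists_cdf_eq (μ : Measure ℝ) [IsProbabilityMeasure μ] [NullSingletonClass μ] {u : ℝ}
    (hu : u ∈ Ioo 0 1) : ∃ t, cdf μ t = u :=
  mem_range_of_exists_le_of_exists_ge (continuous_cdf μ)
    ((tendsto_cdf_atBot μ).eventually_le_const hu.1).exists
    ((tendsto_cdf_atTop μ).eventually_const_le hu.2).exists

lemma measure_cdf_lt_le (μ : Measure ℝ) [IsProbabilityMeasure μ] [NullSingletonClass μ] (u : I) :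
    μ {t | cdf μ t < u} ≤ ENNReal.ofReal u := by
  rcases u.2.1.eq_or_lt with u_zero | u_pos
  · simp [← u_zero, (cdf_nonneg μ _).not_gt]
  rcases u.2.2.eq_or_lt with u_one | u_lt_one
  · simpa [u_one] using prob_le_one
  obtain ⟨y, hy⟩ := exists_cdf_eq μ ⟨u_pos, u_lt_one⟩
  rw [← hy, ofReal_cdf]
  exact measure_mono fun t ht ↦ ((monotone_cdf μ).reflect_lt ht).le

lemma le_measure_cdf_le (μ : Measure ℝ) [IsProbabilityMeasure μ] [NullSingletonClass μ] (u : I) :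
    ENNReal.ofReal u ≤ μ {t | cdf μ t ≤ u} := by
  rcases u.2.1.eq_or_lt with u_zero | u_pos
  · simp [← u_zero]
  rcases u.2.2.eq_or_lt with u_one | u_lt_one
  · simp [u_one, cdf_le_one]
  obtain ⟨y, hy⟩ := exists_cdf_eq μ ⟨u_pos, u_lt_one⟩
  rw [← hy, ofReal_cdf]
  exact measure_mono fun t ht ↦ monotone_cdf μ ht

lemma eq_volume_of_measure_Iio_le_of_le_measure_Iic {ν : Measure I} [IsProbabilityMeasure ν]
    (h_lt : ∀ u : I, ν (Iio u) ≤ ENNReal.ofReal u)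
    (h_le : ∀ u : I, ENNReal.ofReal u ≤ ν (Iic u)) : ν = volume := by
  refine Measure.ext_of_Iic ν volume fun u ↦ ?_
  rw [unitInterval.volume_Iic]
  refine le_antisymm ?_ (h_le u)
  rcases u.2.2.eq_or_lt with u_one | u_lt_one
  · simpa [u_one] using prob_le_one
  have : (𝓝[>] u).NeBot := nhdsGT_neBot_of_exists_gt ⟨1, u_lt_one⟩
  have ofReal_tendsto : Tendsto (fun v : I ↦ ENNReal.ofReal v) (𝓝[>] u) (𝓝 (ENNReal.ofReal u)) :=
    (ENNReal.continuous_ofReal.comp continuous_subtype_val).continuousWithinAt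
  refine ge_of_tendsto ofReal_tendsto (eventually_mem_nhdsWithin.mono fun v huv ↦ ?_)
  exact (measure_mono (Iic_subset_Iio.2 huv)).trans (h_lt v)

theorem map_cdfUnitInterval_self (μ : Measure ℝ) [IsProbabilityMeasure μ]
    [NullSingletonClass μ] : μ.map (cdfUnitInterval μ) = volume := by
  have h_meas : Measurable (cdfUnitInterval μ) := (continuous_cdf μ).measurable.subtype_mk
  have := Measure.isProbabilityMeasure_map (μ := μ) h_meas.aemeasurable
  refine eq_volume_of_measure_Iio_le_of_le_measure_Iic (fun u ↦ ?_) fun u ↦ ?_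
  · rw [Measure.map_apply h_meas measurableSet_Iio]
    exact measure_cdf_lt_le μ u
  · rw [Measure.map_apply h_meas measurableSet_Iic]
    exact le_measure_cdf_le μ u

end ProbabilityIntegralTransform

section Kernel

variable {α β γ : Type*} [MeasurableSpace α] [MeasurableSpace β] [MeasurableSpace γ]

lemma measurable_uncurry_cdfUnitInterval (κ : Kernel α ℝ) [IsMarkovKernel κ] :
    Measurable (uncurry fun a ↦ cdfUnitInterval (κ a)) := by
  have h_le : MeasurableSet {p : (α × ℝ) × ℝ | p.2 ≤ p.1.2} :=
    measurableSet_le measurable_snd (measurable_snd.comp measurable_fst)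
  have h_Iic := (Kernel.measurable_kernel_prodMk_left (κ := κ.prodMkRight ℝ) h_le).ennreal_toReal
  refine Measurable.subtype_mk ?_
  simp only [ProbabilityTheory.cdf_eq_real]
  exact h_Iic

theorem exists_measurable_map_eq_of_nullSingletonClass [Nonempty β] [StandardBorelSpace β]
    (κ : Kernel α ℝ) [IsMarkovKernel κ] (η : Kernel α β) [IsMarkovKernel η] :
    ∃ f : α → ℝ → β, Measurable (uncurry f) ∧
      ∀ a, NullSingletonClass (κ a) → (κ a).map (f a) = η a := by
  obtain ⟨g, hg, g_map⟩ := η.exists_measurable_map_eq_unitInterval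
  have hF := measurable_uncurry_cdfUnitInterval κ
  refine ⟨fun a ↦ g a ∘ cdfUnitInterval (κ a), hg.comp (measurable_fst.prodMk hF), fun a _ ↦ ?_⟩
  rw [← Measure.map_map hg.of_uncurry_left hF.of_uncurry_left, map_cdfUnitInterval_self, g_map]

lemma map_compProd_eq_compProd {μ : Measure α} [SFinite μ] {κ : Kernel α β} [IsSFiniteKernel κ]
    {η : Kernel α γ} [IsSFiniteKernel η] {f : α → β → γ} (hf : Measurable (uncurry f))
    (h : ∀ᵐ a ∂μ, (κ a).map (f a) = η a) :
    (μ ⊗ₘ κ).map (fun p ↦ (p.1, f p.1 p.2)) = μ ⊗ₘ η := by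
  have hf' : Measurable fun p : α × β ↦ (p.1, f p.1 p.2) := measurable_fst.prodMk hf
  ext s hs
  rw [Measure.map_apply hf' hs, Measure.compProd_apply (hf' hs), Measure.compProd_apply hs]
  refine lintegral_congr_ae (h.mono fun a ha ↦ ?_)
  change κ a (f a ⁻¹' (Prod.mk a ⁻¹' s)) = η a (Prod.mk a ⁻¹' s)
  rw [← ha, Measure.map_apply hf.of_uncurry_left (measurable_prodMk_left hs)]

end Kernel

section JointLaw

variable {Ω α β : Type*} [MeasurableSpace Ω] [MeasurableSpace α] [MeasurableSpace β]

lemma ae_measure_singleton_ne_zero_of_countable {μ : Measure α} {s : Set α}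
    (hs : s.Countable) (h : ∀ᵐ x ∂μ, x ∈ s) : ∀ᵐ x ∂μ, μ {x} ≠ 0 := by
  have h_null : μ (⋃ x ∈ s ∩ {x | μ {x} = 0}, {x}) = 0 :=
    (measure_biUnion_null_iff (hs.mono inter_subset_left)).2 fun x hx ↦ hx.2
  filter_upwards [h, measure_eq_zero_iff_ae_notMem.1 h_null] with x hx hx_notMem hx0
  exact hx_notMem (mem_biUnion (show x ∈ _ from ⟨hx, hx0⟩) rfl)

lemma ae_nullSingletonClass_condDistrib [MeasurableSingletonClass α] {P : Measure Ω}
    [IsFiniteMeasure P] {X : Ω → α} (hX : Measurable X) (hXc : (range X).Countable) {T : Ω → ℝ}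
    (hT : Measurable T) [NullSingletonClass (P.map T)] :
    ∀ᵐ x ∂P.map X, NullSingletonClass (condDistrib T X P x) := by
  have ae_mem_range : ∀ᵐ x ∂P.map X, x ∈ range X :=
    (ae_map_iff hX.aemeasurable hXc.measurableSet).2 (ae_of_all _ mem_range_self)
  filter_upwards [ae_measure_singleton_ne_zero_of_countable hXc ae_mem_range] with x hx
  refine ⟨fun t ↦ ?_⟩
  have fiber_null : P (T ⁻¹' {t}) = 0 := by
    rw [← Measure.map_apply hT (measurableSet_singleton t), measure_singleton]
  rw [condDistrib_apply_of_ne_zero hT x hx, Measure.map_apply (hX.prodMk hT)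
    ((measurableSet_singleton x).prod (measurableSet_singleton t)),
    measure_mono_null (fun _ h ↦ h.2) fiber_null, mul_zero]

theorem exists_map_prodMk_eq_of_nullSingletonClass_condDistrib [Nonempty β]
    [StandardBorelSpace β] {P : Measure Ω} [IsFiniteMeasure P] {X : Ω → α} (hX : Measurable X)
    {T : Ω → ℝ} (hT : Measurable T)
    (h : ∀ᵐ x ∂P.map X, NullSingletonClass (condDistrib T X P x))
    {G : Measure (α × β)} (hG : G.map Prod.fst = P.map X) :
    ∃ Y : Ω → β, Measurable Y ∧ P.map (fun ω ↦ (X ω, Y ω)) = G := by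
  have : IsFiniteMeasure (G.map Prod.fst) := hG ▸ inferInstance
  have : IsFiniteMeasure G := Measure.isFiniteMeasure_of_map measurable_fst.aemeasurable
  obtain ⟨f, hf, f_map⟩ :=
    exists_measurable_map_eq_of_nullSingletonClass (condDistrib T X P) G.condKernel
  refine ⟨fun ω ↦ f (X ω) (T ω), hf.comp (hX.prodMk hT), ?_⟩
  calc P.map (fun ω ↦ (X ω, f (X ω) (T ω)))
      = (P.map fun ω ↦ (X ω, T ω)).map (fun p ↦ (p.1, f p.1 p.2)) :=
        (Measure.map_map (measurable_fst.prodMk hf) (hX.prodMk hT)).symm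
    _ = (P.map X ⊗ₘ condDistrib T X P).map (fun p ↦ (p.1, f p.1 p.2)) := by
        rw [compProd_map_condDistrib hT.aemeasurable]
    _ = P.map X ⊗ₘ G.condKernel := map_compProd_eq_compProd hf (h.mono f_map)
    _ = G := by rw [← hG]; exact G.disintegrate G.condKernel

end JointLaw

theorem stmt_13_general {Ω α β : Type*} [MeasurableSpace Ω] [MeasurableSpace α]
    [MeasurableSingletonClass α] [MeasurableSpace β] [StandardBorelSpace β] [Nonempty β]
    (P : Measure Ω) [IsFiniteMeasure P] (hP : Atomless P)
    (X : Ω → α) (hX : Measurable X) (hXc : (range X).Countable)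
    (G : Measure (α × β)) (hmarg : G.map Prod.fst = P.map X) :
    ∃ Y : Ω → β, Measurable Y ∧ P.map (fun ω ↦ (X ω, Y ω)) = G := by
  obtain ⟨T, hT, _⟩ := hP.exists_nullSingletonClass_map
  exact exists_map_prodMk_eq_of_nullSingletonClass_condDistrib hX hT
    (ae_nullSingletonClass_condDistrib hX hXc hT) hmarg

/-- **Lemma.** Let `(Ω, F, P)` be an atomless probability space, `X` a discrete (countably
valued) random variable on it and `G` a Borel probability measure on `ℝ²` whose first
marginal is the law of `X`. Then there exists a random variable `Y` on `(Ω, F, P)` such that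
the joint distribution of `(X, Y)` is `G`. -/
theorem stmt_13 {Ω : Type*} [MeasurableSpace Ω] (P : Measure Ω) [IsProbabilityMeasure P]
    (hP : Atomless P)
    (X : Ω → ℝ) (hX : Measurable X) (hXc : (Set.range X).Countable)
    (G : Measure (ℝ × ℝ)) [IsProbabilityMeasure G]
    (hmarg : Measure.map Prod.fst G = Measure.map X P) :
    ∃ Y : Ω → ℝ, Measurable Y ∧ Measure.map (fun ω => (X ω, Y ω)) P = G :=
  stmt_13_general P hP X hX hXc G hmarg
end

section
/- Let (n_k)_{k≥1} be a strictly increasing sequence of positive integers with n_{k+1}/n_k → ∞. For integers d ≥ 1, N ≥ 1 and ν ∈ ℤ, let L(N, d, ν) = #{ (a, b, k, l) : 1 ≤ a, b ≤ d, 1 ≤ k, l ≤ N, a n_k − b n_l = ν }, where in the case a = b and ν = 0 the trivial solutions k = l are excluded. Then for every fixed d ≥ 1, sup_{ν ∈ ℤ} L(N, d, ν) = o(N) as N → ∞. -/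
open Filter

/-- The Diophantine counting function
`L(N, d, ν) = #{(a,b,k,l) : 1 ≤ a,b ≤ d, 1 ≤ k,l ≤ N, a n_k − b n_l = ν}`,
where for `a = b`, `ν = 0` the trivial solutions `k = l` are excluded. -/
def Lcount (n : ℕ → ℕ) (N d : ℕ) (ν : ℤ) : ℕ :=
  (((Finset.Icc 1 d ×ˢ Finset.Icc 1 d) ×ˢ (Finset.Icc 1 N ×ˢ Finset.Icc 1 N)).filter
    (fun q => (q.1.1 : ℤ) * (n q.2.1 : ℤ) - (q.1.2 : ℤ) * (n q.2.2 : ℤ) = ν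
      ∧ ¬(q.1.1 = q.1.2 ∧ ν = 0 ∧ q.2.1 = q.2.2))).card

/-!
Fix `a`, `b` and `ν`. Once each term of `n` exceeds `d + 1` times every earlier term, two solutions
of `a n_k - b n_l = ν` with `l < k` cannot have different large `k`: in
`a n_k + b n_l' = a n_k' + b n_l` the term with the largest index would outweigh the opposite side.
Hence `a`, `b`, the order of `k` and `l`, and the values of `k` and `l` truncated at a fixed index
determine a solution, so `L(N, d, ν)` is bounded uniformly in `N` and `ν`.
-/

/-- The sequence `n` outgrows its past by the factor `c` from the index `K` on: each term `n j` with
`K ≤ j` exceeds `c` times every earlier term, including those before `K`. -/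
def DominatesFrom (c K : ℕ) (n : ℕ → ℕ) : Prop :=
  ∀ ⦃i j : ℕ⦄, K ≤ j → i < j → c * n i < n j

theorem exists_strictMonoOn_Ici_of_eventually_lt_succ {α : Type*} [Preorder α] {n : ℕ → α}
    (h : ∀ᶠ k in atTop, n k < n (k + 1)) : ∃ K, StrictMonoOn n (Set.Ici K) := by
  obtain ⟨K, hK⟩ := eventually_atTop.1 h
  exact ⟨K, fun _ hi _ _ hij =>
    Nat.rel_of_forall_rel_succ_of_le_of_lt (· < ·) hK hi hij⟩

theorem tendsto_atTop_of_strictMonoOn_Ici {n : ℕ → ℕ} {K : ℕ}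
    (h : StrictMonoOn n (Set.Ici K)) : Tendsto n atTop atTop := by
  have hshift : StrictMono fun k => n (k + K) := fun i j hij =>
    h (Nat.le_add_left K i) (Nat.le_add_left K j) (Nat.add_lt_add_right hij K)
  exact (tendsto_add_atTop_iff_nat K).1 hshift.tendsto_atTop

theorem exists_dominatesFrom_of_eventually_mul_lt_succ {c : ℕ} (hc : 1 ≤ c) {n : ℕ → ℕ}
    (h : ∀ᶠ k in atTop, c * n k < n (k + 1)) : ∃ K, DominatesFrom c K n := by
  obtain ⟨K₁, hmono⟩ := exists_strictMonoOn_Ici_of_eventually_lt_succ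
    (h.mono fun k hk => (Nat.le_mul_of_pos_left (n k) hc).trans_lt hk)
  obtain ⟨K₂, hstep⟩ := eventually_atTop.1 h
  have hinitial : ∀ᶠ j in atTop, ∀ i ∈ Finset.range (max K₁ K₂), c * n i < n j :=
    (Finset.eventually_all _).2 fun i _ =>
      (tendsto_atTop_of_strictMonoOn_Ici hmono).eventually_gt_atTop (c * n i)
  obtain ⟨K, hK⟩ := eventually_atTop.1 hinitial
  refine ⟨K, fun i j hj hij => ?_⟩
  rcases lt_or_ge i (max K₁ K₂) with hi | hi
  · exact hK j hj i (Finset.mem_range.2 hi)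
  · have hi₁ : K₁ ≤ i := (le_max_left _ _).trans hi
    calc c * n i < n (i + 1) := hstep i ((le_max_right _ _).trans hi)
      _ ≤ n j := hmono.monotoneOn (Set.mem_Ici.2 (by omega)) (Set.mem_Ici.2 (by omega)) hij

theorem eventually_mul_lt_succ_of_tendsto_div_atTop {n : ℕ → ℕ}
    (h : Tendsto (fun k => (n (k + 1) : ℝ) / (n k : ℝ)) atTop atTop) (c : ℕ) :
    ∀ᶠ k in atTop, c * n k < n (k + 1) := by
  filter_upwards [h.eventually_gt_atTop (c : ℝ)] with k hk
  have hne : (n k : ℝ) ≠ 0 := fun h0 => by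
    rw [h0, div_zero] at hk
    exact hk.not_ge c.cast_nonneg
  rw [lt_div_iff₀ (lt_of_le_of_ne (n k).cast_nonneg hne.symm)] at hk
  exact_mod_cast hk

theorem mul_add_mul_lt_mul_of_succ_mul_lt {a b d x y z : ℕ} (ha : 1 ≤ a) (hb : b ≤ d)
    (hx : (d + 1) * x < z) (hy : (d + 1) * y < z) : a * x + b * y < a * z := by
  refine lt_of_mul_lt_mul_left (a := d + 1) ?_ (Nat.zero_le _)
  calc (d + 1) * (a * x + b * y) = a * ((d + 1) * x) + b * ((d + 1) * y) := by ring
    _ < a * z + b * z :=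
      add_lt_add_of_lt_of_le (Nat.mul_lt_mul_of_pos_left hx ha) (Nat.mul_le_mul_left b hy.le)
    _ ≤ a * z + a * d * z := by gcongr; exact hb.trans (Nat.le_mul_of_pos_left d ha)
    _ = (d + 1) * (a * z) := by ring

namespace DominatesFrom

variable {n : ℕ → ℕ} {c d K : ℕ} {a b k k' l l' : ℕ}

theorem strictMonoOn_Ici (h : DominatesFrom c K n) (hc : 1 ≤ c) : StrictMonoOn n (Set.Ici K) :=
  fun i _ _ hj hij => (Nat.le_mul_of_pos_left (n i) hc).trans_lt (h hj hij)

theorem eq_of_apply_eq (h : DominatesFrom c K n) (hc : 1 ≤ c) (hmin : min k K = min k' K)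
    (heq : n k = n k') : k = k' := by
  rcases lt_or_ge k K with hk | hk
  · omega
  · have hk' : K ≤ k' := by omega
    exact (h.strictMonoOn_Ici hc).injOn hk hk' heq

theorem mul_add_mul_lt_mul (h : DominatesFrom (d + 1) K n) (ha : 1 ≤ a) (hb : b ≤ d)
    (hk' : K ≤ k') (hk : k < k') (hl' : l' < k') : a * n k + b * n l' < a * n k' :=
  mul_add_mul_lt_mul_of_succ_mul_lt ha hb (h hk' hk) (h hk' hl')

theorem eq_of_lt_of_mul_add_mul_eq (h : DominatesFrom (d + 1) K n) (ha : 1 ≤ a) (hb : b ≤ d)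
    (hlk : l < k) (hlk' : l' < k') (hmin : min k K = min k' K)
    (heq : a * n k + b * n l' = a * n k' + b * n l) : k = k' := by
  rcases lt_trichotomy k k' with hlt | hkk' | hgt
  · have := h.mul_add_mul_lt_mul ha hb (by omega) hlt hlk'
    omega
  · exact hkk'
  · have := h.mul_add_mul_lt_mul ha hb (by omega) hgt hlk
    omega

theorem pair_eq_of_lt_of_mul_add_mul_eq (h : DominatesFrom (d + 1) K n) (ha : 1 ≤ a)
    (hb : b ∈ Finset.Icc 1 d) (hlk : l < k) (hlk' : l' < k') (hk : min k K = min k' K)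
    (hl : min l K = min l' K) (heq : a * n k + b * n l' = a * n k' + b * n l) :
    k = k' ∧ l = l' := by
  obtain ⟨hb₁, hbd⟩ := Finset.mem_Icc.1 hb
  obtain rfl := h.eq_of_lt_of_mul_add_mul_eq ha hbd hlk hlk' hk heq
  have hnl : n l = n l' := Nat.eq_of_mul_eq_mul_left hb₁ (by omega)
  exact ⟨rfl, h.eq_of_apply_eq d.succ_pos hl hnl⟩

theorem eq_of_ne_of_mul_add_mul_eq (h : DominatesFrom c K n) (hc : 1 ≤ c) (hab : a ≠ b)
    (hmin : min k K = min k' K) (heq : a * n k + b * n k' = a * n k' + b * n k) : k = k' := by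
  refine h.eq_of_apply_eq hc hmin ?_
  have hprod : ((a : ℤ) - b) * n k = (a - b) * n k' := by
    zify at heq
    linarith
  exact_mod_cast mul_left_cancel₀ (sub_ne_zero.2 (Nat.cast_injective.ne hab)) hprod

theorem index_pair_eq_of_mul_add_mul_eq (h : DominatesFrom (d + 1) K n) (ha : a ∈ Finset.Icc 1 d)
    (hb : b ∈ Finset.Icc 1 d) (hdiag : k = l → a ≠ b) (hcmp : cmp k l = cmp k' l')
    (hk : min k K = min k' K) (hl : min l K = min l' K)
    (heq : a * n k + b * n l' = a * n k' + b * n l) : k = k' ∧ l = l' := by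
  rcases lt_trichotomy k l with hkl | rfl | hlk
  · have hkl' : k' < l' := (lt_iff_lt_of_cmp_eq_cmp hcmp).1 hkl
    exact (h.pair_eq_of_lt_of_mul_add_mul_eq (Finset.mem_Icc.1 hb).1 ha hkl hkl' hl hk
      (by omega)).symm
  · obtain rfl : k' = l' := (eq_iff_eq_of_cmp_eq_cmp hcmp).1 rfl
    have hkk' : k = k' := h.eq_of_ne_of_mul_add_mul_eq d.succ_pos (hdiag rfl) hk heq
    exact ⟨hkk', hkk'⟩
  · have hlk' : l' < k' := (lt_iff_lt_of_cmp_eq_cmp (cmp_eq_cmp_symm.1 hcmp)).1 hlk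
    exact h.pair_eq_of_lt_of_mul_add_mul_eq (Finset.mem_Icc.1 ha).1 hb hlk hlk' hk hl heq

theorem Lcount_le (h : DominatesFrom (d + 1) K n) (N : ℕ) (ν : ℤ) :
    Lcount n N d ν ≤ d * d * (3 * ((K + 1) * (K + 1))) := by
  let codes := (Finset.Icc 1 d ×ˢ Finset.Icc 1 d) ×ˢ
    ((Finset.univ : Finset Ordering) ×ˢ (Finset.range (K + 1) ×ˢ Finset.range (K + 1)))
  have hcard : codes.card = d * d * (3 * ((K + 1) * (K + 1))) := by
    simp [codes, show Fintype.card Ordering = 3 from rfl]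
  rw [← hcard, Lcount]
  apply Finset.card_le_card_of_injOn
    (fun q => (q.1, cmp q.2.1 q.2.2, min q.2.1 K, min q.2.2 K))
  · intro q hq
    have hab := (Finset.mem_product.1 (Finset.mem_filter.1 hq).1).1
    have hmin : ∀ m, min m K ∈ Finset.range (K + 1) := fun m =>
      Finset.mem_range.2 (Nat.lt_succ_of_le (min_le_right m K))
    exact Finset.mk_mem_product hab (Finset.mk_mem_product (Finset.mem_univ _)
      (Finset.mk_mem_product (hmin _) (hmin _)))
  · rintro ⟨⟨a, b⟩, k, l⟩ hq ⟨⟨a', b'⟩, k', l'⟩ hq' hcode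
    simp only [Prod.mk.injEq] at hcode
    obtain ⟨⟨rfl, rfl⟩, hcmp, hk, hl⟩ := hcode
    simp only [Finset.coe_filter, Finset.mem_product, Set.mem_ofPred_eq] at hq hq'
    obtain ⟨⟨⟨ha, hb⟩, -⟩, hν, hnontrivial⟩ := hq
    have heq : a * n k + b * n l' = a * n k' + b * n l := by
      zify
      linarith [hν, hq'.2.1]
    have hdiag : k = l → a ≠ b := by
      rintro rfl rfl
      exact hnontrivial ⟨rfl, by simpa only [sub_self] using hν.symm, rfl⟩
    obtain ⟨rfl, rfl⟩ := h.index_pair_eq_of_mul_add_mul_eq ha hb hdiag hcmp hk hl heq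
    rfl

end DominatesFrom

theorem tendsto_iSup_div_natCast_of_le {ι : Type*} [Nonempty ι] {f : ℕ → ι → ℝ} {C : ℝ}
    (hf : ∀ N i, 0 ≤ f N i) (hC : ∀ N i, f N i ≤ C) :
    Tendsto (fun N => (⨆ i, f N i) / (N : ℝ)) atTop (nhds 0) :=
  squeeze_zero (fun N => div_nonneg (Real.iSup_nonneg (hf N)) N.cast_nonneg)
    (fun N => div_le_div_of_nonneg_right (ciSup_le (hC N)) N.cast_nonneg)
    (tendsto_const_div_atTop_nhds_zero_nat C)

theorem stmt_17_general (n : ℕ → ℕ) (d : ℕ)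
    (hgrowth : ∀ᶠ k in atTop, (d + 1) * n k < n (k + 1)) :
    Tendsto (fun N => (⨆ ν : ℤ, (Lcount n N d ν : ℝ)) / (N : ℝ)) atTop (nhds 0) := by
  obtain ⟨K, hK⟩ := exists_dominatesFrom_of_eventually_mul_lt_succ d.succ_pos hgrowth
  exact tendsto_iSup_div_natCast_of_le (fun _ _ => Nat.cast_nonneg _)
    (fun N ν => Nat.cast_le.2 (hK.Lcount_le N ν))

/-- **Proposition.** If `(n_k)` is strictly increasing with `n_{k+1}/n_k → ∞`, then for every
fixed `d ≥ 1` one has `sup_{ν ∈ ℤ} L(N, d, ν) = o(N)` as `N → ∞`, uniformly in `ν`. -/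
theorem stmt_17 (n : ℕ → ℕ) (hpos : ∀ k, 1 ≤ k → 0 < n k)
    (hmono : ∀ k, 1 ≤ k → n k < n (k + 1))
    (hgap : Tendsto (fun k => (n (k + 1) : ℝ) / (n k : ℝ)) atTop atTop)
    (d : ℕ) (hd : 1 ≤ d) :
    Tendsto (fun N => (⨆ ν : ℤ, (Lcount n N d ν : ℝ)) / (N : ℝ)) atTop (nhds 0) := by
  exact stmt_17_general n d (eventually_mul_lt_succ_of_tendsto_div_atTop hgap (d + 1))
end
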